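/- Let k be a field of arbitrary characteristic, let Q be a connected finite acyclic Dynkin quiver with r vertices, let Π = Π(Q) be its preprojective algebra graded by path length, let C be the adjacency matrix of the double quiver, and let h be the Coxeter number of the underlying Dynkin diagram. Suppose ν is a permutation of the vertex set Q_0 which is a Nakayama permutation of Π, i.e., for every i ∈ Q_0 the k-linear dual D(e_i Π) = Hom_k(e_i Π, k) is isomorphic to Π e_{ν(i)} as a left Π-module. Let P be the permutation matrix P = (δ_{ν(i),j})_{i,j}. Then the matrix Hilbert series satisfies h_Π(t)·(1 − Ct + t²·1) = 1 + P t^h in the ring of r×r matrices over k[[t]]; equivalently h_Π(t) = (1 + P t^h)/(1 − Ct + t²). -/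

import Mathlib

/-!
STATEMENT 0: Hilbert series of the preprojective algebra of a connected finite
acyclic non-Dynkin quiver: `h_Π(t) · (1 - C t + t² · 1) = 1` over `k[[t]]`.

A finite quiver is encoded by a vertex count `r`, a finite arrow type and
source/target maps.  The preprojective algebra is presented as the quotient of
the free algebra on generators `e_i` (trivial paths), `α` (original arrows) and
`α*` (reversed arrows) by the path-algebra relations together with the mesh
relations.  The grading is by path length (vertices have weight 0, arrows of
the double quiver weight 1); the degree-`n` piece is the span of the images of
the weight-`n` monomials, and `e_i Π_n e_j` is its image under
`x ↦ e_i * x * e_j`.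
-/

/-- A finite quiver. -/
structure FinQuiver where
  r : ℕ
  Arrow : Type
  [instFintypeArrow : Fintype Arrow]
  src : Arrow → Fin r
  tgt : Arrow → Fin r

attribute [instance] FinQuiver.instFintypeArrow

namespace FinQuiver

variable (Q : FinQuiver)

/-- The underlying graph of `Q` is connected. -/
def Connected : Prop :=
  ∀ i j : Fin Q.r, Relation.ReflTransGen
    (fun a b => ∃ e : Q.Arrow, (Q.src e = a ∧ Q.tgt e = b) ∨ (Q.src e = b ∧ Q.tgt e = a)) i j

/-- `Q` has no oriented cycles. -/
def Acyclic : Prop :=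
  ∀ i : Fin Q.r, ¬ Relation.TransGen (fun a b => ∃ e : Q.Arrow, Q.src e = a ∧ Q.tgt e = b) i i

/-- The Tits quadratic form of `Q` on `ℝ^{Q₀}`. -/
def titsForm (x : Fin Q.r → ℝ) : ℝ :=
  (∑ i, x i ^ 2) - ∑ e : Q.Arrow, x (Q.src e) * x (Q.tgt e)

/-- `Q` is Dynkin iff its Tits form is positive definite. -/
def IsDynkin : Prop := ∀ x : Fin Q.r → ℝ, x ≠ 0 → 0 < Q.titsForm x

/-- Adjacency matrix of `Q`: the `(i,j)` entry counts arrows `i → j`. -/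
def adjMatrix : Matrix (Fin Q.r) (Fin Q.r) ℕ := Matrix.of fun i j =>
  Fintype.card {e : Q.Arrow // Q.src e = i ∧ Q.tgt e = j}

/-- Adjacency matrix `C` of the double quiver `Q̄`. -/
def doubleAdj : Matrix (Fin Q.r) (Fin Q.r) ℕ := Matrix.of fun i j =>
  Q.adjMatrix i j + Q.adjMatrix j i

end FinQuiver

/-- Generators for the path algebra of the double quiver: trivial paths,
original arrows, reversed arrows. -/
inductive PPGen (Q : FinQuiver) : Type
  | vert : Fin Q.r → PPGen Q
  | fwd : Q.Arrow → PPGen Q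
  | bwd : Q.Arrow → PPGen Q

/-- The mesh element `ρ_i = ∑_{src α = i} α α* - ∑_{tgt α = i} α* α`
in the free algebra.  (An arrow `α` runs from `src α` to `tgt α`, and paths
compose left-to-right, so `e_i ρ_i e_i = ρ_i`.) -/
noncomputable def meshElem (k : Type) [Field k] (Q : FinQuiver) (i : Fin Q.r) :
    FreeAlgebra k (PPGen Q) :=
  (∑ e : Q.Arrow, if Q.src e = i then
      FreeAlgebra.ι k (PPGen.fwd e) * FreeAlgebra.ι k (PPGen.bwd e) else 0)
  - ∑ e : Q.Arrow, if Q.tgt e = i then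
      FreeAlgebra.ι k (PPGen.bwd e) * FreeAlgebra.ι k (PPGen.fwd e) else 0

/-- Defining relations of the preprojective algebra: the `e_i` are orthogonal
idempotents summing to `1`, arrows are composable according to souce and target,
and all mesh relations `ρ_i = 0` hold. -/
inductive PPRel (k : Type) [Field k] (Q : FinQuiver) :
    FreeAlgebra k (PPGen Q) → FreeAlgebra k (PPGen Q) → Prop
  | vert_idem (i : Fin Q.r) :
      PPRel k Q (FreeAlgebra.ι k (PPGen.vert i) * FreeAlgebra.ι k (PPGen.vert i))
        (FreeAlgebra.ι k (PPGen.vert i))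
  | vert_orth (i j : Fin Q.r) (h : i ≠ j) :
      PPRel k Q (FreeAlgebra.ι k (PPGen.vert i) * FreeAlgebra.ι k (PPGen.vert j)) 0
  | vert_sum : PPRel k Q (∑ i : Fin Q.r, FreeAlgebra.ι k (PPGen.vert i)) 1
  | fwd_left (e : Q.Arrow) :
      PPRel k Q (FreeAlgebra.ι k (PPGen.vert (Q.src e)) * FreeAlgebra.ι k (PPGen.fwd e))
        (FreeAlgebra.ι k (PPGen.fwd e))
  | fwd_right (e : Q.Arrow) :
      PPRel k Q (FreeAlgebra.ι k (PPGen.fwd e) * FreeAlgebra.ι k (PPGen.vert (Q.tgt e)))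
        (FreeAlgebra.ι k (PPGen.fwd e))
  | bwd_left (e : Q.Arrow) :
      PPRel k Q (FreeAlgebra.ι k (PPGen.vert (Q.tgt e)) * FreeAlgebra.ι k (PPGen.bwd e))
        (FreeAlgebra.ι k (PPGen.bwd e))
  | bwd_right (e : Q.Arrow) :
      PPRel k Q (FreeAlgebra.ι k (PPGen.bwd e) * FreeAlgebra.ι k (PPGen.vert (Q.src e)))
        (FreeAlgebra.ι k (PPGen.bwd e))
  | mesh (i : Fin Q.r) : PPRel k Q (meshElem k Q i) 0

/-- The preprojective algebra `Π(Q)`. -/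
abbrev PreprojAlg (k : Type) [Field k] (Q : FinQuiver) : Type :=
  RingQuot (PPRel k Q)

/-- The image in `Π(Q)` of a generator. -/
noncomputable def ppGen (k : Type) [Field k] (Q : FinQuiver) (g : PPGen Q) :
    PreprojAlg k Q :=
  RingQuot.mkAlgHom k (PPRel k Q) (FreeAlgebra.ι k g)

/-- The idempotent `e_i ∈ Π(Q)`. -/
noncomputable def ppIdem (k : Type) [Field k] (Q : FinQuiver) (i : Fin Q.r) :
    PreprojAlg k Q :=
  ppGen k Q (PPGen.vert i)

/-- Path-length weight of a generator. -/
def ppWt (Q : FinQuiver) : PPGen Q → ℕ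
  | .vert _ => 0
  | .fwd _ => 1
  | .bwd _ => 1

/-- The degree-`n` component `Π(Q)_n`: span of images of weight-`n` monomials. -/
noncomputable def ppPiece (k : Type) [Field k] (Q : FinQuiver) (n : ℕ) :
    Submodule k (PreprojAlg k Q) :=
  Submodule.span k
    {x | ∃ l : List (PPGen Q), (l.map (ppWt Q)).sum = n ∧ x = (l.map (ppGen k Q)).prod}

/-- The subspace `e_i Π(Q)_n e_j`. -/
noncomputable def ppCorner (k : Type) [Field k] (Q : FinQuiver) (n : ℕ) (i j : Fin Q.r) :
    Submodule k (PreprojAlg k Q) :=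
  (ppPiece k Q n).map
    ((LinearMap.mulLeft k (ppIdem k Q i)).comp (LinearMap.mulRight k (ppIdem k Q j)))

/-- The matrix-valued Hilbert series `h_Π(t) = ∑_n [Π(Q)_n] tⁿ` over `k[[t]]`. -/
noncomputable def ppHilb (k : Type) [Field k] (Q : FinQuiver) :
    Matrix (Fin Q.r) (Fin Q.r) (PowerSeries k) :=
  Matrix.of fun i j => PowerSeries.mk fun n => (Module.finrank k (ppCorner k Q n i j) : k)

namespace FinQuiver

/-- The integral Tits form of `Q`. -/
def titsFormZ (Q : FinQuiver) (x : Fin Q.r → ℤ) : ℤ :=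
  (∑ i, x i ^ 2) - ∑ e : Q.Arrow, x (Q.src e) * x (Q.tgt e)

/-- `h` is the Coxeter number of (the underlying Dynkin graph of) `Q`:
the number of roots of the Tits form equals `r·h`. -/
def IsCoxeterNumber (Q : FinQuiver) (h : ℕ) : Prop :=
  {x : Fin Q.r → ℤ | Q.titsFormZ x = 1}.ncard = Q.r * h

end FinQuiver

/-- The right ideal `e_i Π(Q)`, as a `k`-subspace. -/
noncomputable def ppRowIdeal (k : Type) [Field k] (Q : FinQuiver) (i : Fin Q.r) :
    Submodule k (PreprojAlg k Q) :=
  LinearMap.range (LinearMap.mulLeft k (ppIdem k Q i))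

/-- The left ideal `Π(Q) e_j`, as a `k`-subspace. -/
noncomputable def ppColIdeal (k : Type) [Field k] (Q : FinQuiver) (j : Fin Q.r) :
    Submodule k (PreprojAlg k Q) :=
  LinearMap.range (LinearMap.mulRight k (ppIdem k Q j))

lemma mul_mem_ppColIdeal (k : Type) [Field k] (Q : FinQuiver) (j : Fin Q.r)
    (a : PreprojAlg k Q) {x : PreprojAlg k Q} (hx : x ∈ ppColIdeal k Q j) :
    a * x ∈ ppColIdeal k Q j := by
  obtain ⟨y, rfl⟩ := hx
  exact ⟨a * y, by simp [LinearMap.mulRight_apply, mul_assoc]⟩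

lemma mem_ppRowIdeal_mul (k : Type) [Field k] (Q : FinQuiver) (i : Fin Q.r)
    (a : PreprojAlg k Q) {x : PreprojAlg k Q} (hx : x ∈ ppRowIdeal k Q i) :
    x * a ∈ ppRowIdeal k Q i := by
  obtain ⟨y, rfl⟩ := hx
  exact ⟨y * a, by simp [LinearMap.mulLeft_apply, mul_assoc]⟩

/-- `ν` is a Nakayama permutation of `Π(Q)`: for every vertex `i`, the
`k`-linear dual `D(e_i Π)` of the right module `e_i Π` is isomorphic to
`Π e_{ν(i)}` as a left `Π`-module.  The left `Π`-module structure on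
`D(e_i Π)` is `(a • f)(x) = f(x·a)`, so an isomorphism of left `Π`-modules is
a `k`-linear equivalence `φ : Π e_{ν(i)} ≃ D(e_i Π)` with
`φ(a·m)(x) = φ(m)(x·a)` for all `a ∈ Π`, `m ∈ Π e_{ν(i)}`, `x ∈ e_i Π`. -/
def IsNakayamaPerm (k : Type) [Field k] (Q : FinQuiver) (ν : Equiv.Perm (Fin Q.r)) :
    Prop :=
  ∀ i : Fin Q.r,
    ∃ φ : ↥(ppColIdeal k Q (ν i)) ≃ₗ[k] Module.Dual k ↥(ppRowIdeal k Q i),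
      ∀ (a : PreprojAlg k Q) (m : ↥(ppColIdeal k Q (ν i))) (x : ↥(ppRowIdeal k Q i)),
        φ ⟨a * (m : PreprojAlg k Q), mul_mem_ppColIdeal k Q (ν i) a m.2⟩ x =
          φ m ⟨(x : PreprojAlg k Q) * a, mem_ppRowIdeal_mul k Q i a x.2⟩

/-
Every element of positive degree of `Π = Π(Q)` has the form `∑ y a * a`, and the relations among
such expressions come from the mesh relations alone. For each `j`, the sequence
`e_i Πₙ e_j → ⨁ e_i Πₙ₊₁ e_{s(a)} → e_i Πₙ₊₂ e_j → 0` over the arrows `a` ending at `j` is therefore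
exact, and the kernel on the left is the part of the socle of `e_i Π` in `e_i Πₙ e_j`. The Nakayama
permutation makes this socle one-dimensional, in the top degree of `e_i Π` and at the vertex `ν i`.
Up to that degree the rows of `[Πₙ]` are those of the Chebyshev matrices `Sₙ(C)`, and since these
commute with `C` the top degree is the same `D` for all `i`. Summing the recursion
`[Πₙ₊₂] + [Πₙ] = [Πₙ₊₁] C + δ_{n,D} P` gives the formula with `D + 2` in place of `h`.

It remains to see that there are `r (D + 2)` roots. A bipartition of the tree `Q` turns a root into
a pair of nonnegative vectors on which the form `⟨x, x⟩ + ⟨y, y⟩ - ⟨x, C y⟩` is `1`. The shift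
`(x, y) ↦ (y, C y - x)` preserves the form, and the pairs arising are those on the orbits
`(Sₙ₋₁(C) e_i, Sₙ(C) e_i)`, of which there are `r (D + 2)`.
-/

open scoped Matrix

/-! ### Chebyshev polynomials of a matrix -/

section ChebyshevMatrices

variable {ι : Type*} [Fintype ι]

lemma row_eq_zero_of_vecMul_eq_zero {v : ι → ℤ} {A : Matrix ι ι ℤ} (hv : 0 ≤ v)
    (hA : ∀ i j, 0 ≤ A i j) {i : ι} (hi : v i ≠ 0) (h : v ᵥ* A = 0) : A i = 0 := by
  ext j
  have hsum : ∑ l, v l * A l j = 0 := congrFun h j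
  have hterm := (Finset.sum_eq_zero_iff_of_nonneg fun l _ => mul_nonneg (hv l) (hA l j)).1
    hsum i (Finset.mem_univ i)
  exact (mul_eq_zero.1 hterm).resolve_left hi

lemma coeff_mul_map_C {R : Type*} [CommRing R] (F : Matrix ι ι (PowerSeries R)) (A : Matrix ι ι R)
    (n : ℕ) (i j : ι) :
    PowerSeries.coeff n ((F * A.map PowerSeries.C) i j) =
      (F.map (PowerSeries.coeff n) * A) i j := by
  simp [Matrix.mul_apply, PowerSeries.coeff_mul_C]

variable [DecidableEq ι]

section CommRing

variable {R : Type*} [CommRing R]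

/-- The value at a square matrix of the rescaled Chebyshev polynomial `S n` of the second kind,
so that `∑ n, chebMatrix C n * t ^ n` is the inverse of `1 - C * t + t ^ 2`. The index is an
integer: `chebMatrix C (-1) = 0`, and the recursion runs in both directions. -/
noncomputable def chebMatrix (C : Matrix ι ι R) (n : ℤ) : Matrix ι ι R :=
  Polynomial.aeval C (Polynomial.Chebyshev.S R n)

variable (C : Matrix ι ι R)

@[simp]
lemma chebMatrix_neg_one : chebMatrix C (-1) = 0 := by
  simp [chebMatrix]

@[simp]
lemma chebMatrix_zero : chebMatrix C 0 = 1 := by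
  simp [chebMatrix]

@[simp]
lemma chebMatrix_one : chebMatrix C 1 = C := by
  simp [chebMatrix]

lemma chebMatrix_add_two (n : ℤ) :
    chebMatrix C (n + 2) = C * chebMatrix C (n + 1) - chebMatrix C n := by
  simp [chebMatrix, Polynomial.Chebyshev.S_add_two]

lemma chebMatrix_neg_sub_two (n : ℤ) : chebMatrix C (-n - 2) = -chebMatrix C n := by
  simp [chebMatrix, Polynomial.Chebyshev.S_neg_sub_two]

lemma chebMatrix_mul_comm (n : ℤ) : chebMatrix C n * C = C * chebMatrix C n := by
  simpa [chebMatrix] using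
    congrArg (Polynomial.aeval C) (mul_comm (Polynomial.Chebyshev.S R n) Polynomial.X)

variable {C}

lemma isSymm_chebMatrix (hC : C.IsSymm) (n : ℤ) : (chebMatrix C n).IsSymm := by
  have h := Polynomial.aeval_algHom_apply (Matrix.transposeAlgEquiv ι R R) C
    (Polynomial.Chebyshev.S R n)
  simp only [Matrix.transposeAlgEquiv_apply, hC.eq, Polynomial.aeval_op_apply] at h
  exact (MulOpposite.op_injective h).symm

lemma eq_vecMul_chebMatrix {u : ℕ → ι → R} {d : ℕ} (h1 : u 1 = u 0 ᵥ* C)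
    (hrec : ∀ n < d, u (n + 2) + u n = u (n + 1) ᵥ* C) :
    ∀ n ≤ d + 1, u n = u 0 ᵥ* chebMatrix C n := by
  intro n
  induction n using Nat.twoStepInduction with
  | zero => simp
  | one => simpa using h1
  | more n ih ih' =>
    intro hn
    rw [eq_sub_of_add_eq (hrec n (by lia)), ih (by lia), ih' (by lia), Matrix.vecMul_vecMul,
      ← Matrix.vecMul_sub]
    push_cast
    rw [chebMatrix_mul_comm, chebMatrix_add_two]

lemma hilbertSeries_mul_one_sub_X_smul_add {H : ℕ → Matrix ι ι R} {P : Matrix ι ι R} {D : ℕ}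
    (h0 : H 0 = 1) (h1 : H 1 = C)
    (hrec : ∀ n, H (n + 2) + H n = H (n + 1) * C + if n = D then P else 0) :
    (Matrix.of fun i j => PowerSeries.mk fun n => H n i j) *
        (1 - (PowerSeries.X : PowerSeries R) • C.map PowerSeries.C +
          (PowerSeries.X ^ 2 : PowerSeries R) • 1) =
      1 + (PowerSeries.X ^ (D + 2) : PowerSeries R) • P.map PowerSeries.C := by
  have hcoeff (n : ℕ) :
      (Matrix.of fun i j => PowerSeries.mk fun n => H n i j).map (PowerSeries.coeff n) = H n := by
    ext; simp
  ext i j n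
  rw [mul_add, mul_sub, Matrix.mul_one, Matrix.mul_smul, Matrix.mul_smul, Matrix.mul_one]
  simp only [Matrix.add_apply, Matrix.sub_apply, Matrix.smul_apply, smul_eq_mul, map_add, map_sub,
    Matrix.of_apply, PowerSeries.coeff_mk, Matrix.map_apply, Matrix.one_apply]
  match n with
  | 0 => by_cases hij : i = j <;> simp [h0, hij]
  | 1 =>
    rw [PowerSeries.coeff_succ_X_mul, coeff_mul_map_C, hcoeff, h0, Matrix.one_mul, h1]
    by_cases hij : i = j <;> simp [hij, PowerSeries.coeff_X_pow_mul', PowerSeries.coeff_one]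
  | n + 2 =>
    have h := congrFun₂ (hrec n) i j
    have hone : PowerSeries.coeff (n + 2) (if i = j then (1 : PowerSeries R) else 0) = 0 := by
      split_ifs <;> simp [PowerSeries.coeff_one]
    have hP : PowerSeries.coeff (n + 2) (PowerSeries.X ^ (D + 2) * PowerSeries.C (P i j)) =
        (if n = D then P else 0) i j := by
      rw [PowerSeries.coeff_mul_C, PowerSeries.coeff_X_pow]
      by_cases hn : n = D <;> simp [hn]
    rw [PowerSeries.coeff_succ_X_mul, coeff_mul_map_C, hcoeff, PowerSeries.coeff_X_pow_mul,
      PowerSeries.coeff_mk, hone, hP]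
    simp only [Matrix.add_apply] at h
    linear_combination h

end CommRing

/-- The matrices `S₀(C), …, S_D(C)` have nonnegative entries and no zero row, and
`S_{D+1}(C) = 0`. -/
structure ChebyshevPositiveUpTo (C : Matrix ι ι ℤ) (D : ℕ) : Prop where
  nonneg : ∀ n ≤ D, ∀ i j, 0 ≤ chebMatrix C n i j
  row_ne_zero : ∀ n ≤ D, ∀ i, chebMatrix C n i ≠ 0
  eq_zero : chebMatrix C (D + 1) = 0

/-- At a vertex where the vanishing degree is least, `C * Sₙ(C) = Sₙ(C) * C` forces the rows of
all neighbours to vanish in the same degree. -/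
theorem exists_forall_eq_of_chebMatrix_rows [Nonempty ι] {C : Matrix ι ι ℤ}
    (hC : ∀ i j, 0 ≤ C i j)
    (hconn : ∀ i j, Relation.ReflTransGen (fun a b => C a b ≠ 0) i j) {d : ι → ℕ}
    (hpos : ∀ i, ∀ n ≤ d i + 1, ∀ j, 0 ≤ chebMatrix C n i j)
    (hzero : ∀ i, ∀ n ≤ d i + 1, chebMatrix C n i = 0 ↔ n = d i + 1) :
    ∃ D, ∀ i, d i = D := by
  obtain ⟨b, hb⟩ := Finite.exists_min d
  refine ⟨d b, fun i => ?_⟩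
  induction hconn b i with
  | refl => rfl
  | @tail c a _ hca hc =>
    have hrow : C c ᵥ* chebMatrix C (d b + 1 : ℕ) = 0 := by
      rw [← Matrix.mul_apply_eq_vecMul, ← chebMatrix_mul_comm, Matrix.mul_apply_eq_vecMul,
        (hzero c _ (by rw [hc])).2 (by rw [hc]), Matrix.zero_vecMul]
    have ha := row_eq_zero_of_vecMul_eq_zero (hC c) (fun i => hpos i _ (by simpa using hb i))
      hca hrow
    have := (hzero a _ (by simpa using hb a)).1 ha
    lia

end ChebyshevMatrices

/-! ### Pairs of nonnegative vectors -/

section PositivePairs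

variable {ι : Type*} [Fintype ι] {C : Matrix ι ι ℤ}

/-- The quadratic form `⟨x, x⟩ + ⟨y, y⟩ - ⟨x, C y⟩` on pairs of integral vectors. -/
def pairForm (C : Matrix ι ι ℤ) (p : (ι → ℤ) × (ι → ℤ)) : ℤ :=
  p.1 ⬝ᵥ p.1 + p.2 ⬝ᵥ p.2 - p.1 ⬝ᵥ C *ᵥ p.2

/-- One step `(x, y) ↦ (y, C y - x)` of the recursion `xₙ₊₁ = C xₙ - xₙ₋₁`, as a permutation. -/
def pairShift (C : Matrix ι ι ℤ) : Equiv.Perm ((ι → ℤ) × (ι → ℤ)) where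
  toFun p := (p.2, C *ᵥ p.2 - p.1)
  invFun p := (C *ᵥ p.1 - p.2, p.1)
  left_inv p := by simp
  right_inv p := by simp

lemma pairShift_apply (p : (ι → ℤ) × (ι → ℤ)) : pairShift C p = (p.2, C *ᵥ p.2 - p.1) := rfl

lemma pairShift_inv_apply (p : (ι → ℤ) × (ι → ℤ)) :
    (pairShift C)⁻¹ p = (C *ᵥ p.1 - p.2, p.1) := rfl

lemma dotProduct_mulVec_comm (hC : C.IsSymm) (x y : ι → ℤ) :
    x ⬝ᵥ C *ᵥ y = y ⬝ᵥ C *ᵥ x := by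
  rw [Matrix.dotProduct_mulVec, ← Matrix.mulVec_transpose, hC.eq, dotProduct_comm]

lemma pairForm_pairShift (hC : C.IsSymm) (p : (ι → ℤ) × (ι → ℤ)) :
    pairForm C (pairShift C p) = pairForm C p := by
  have hcomm := dotProduct_mulVec_comm hC p.2 p.1
  have hsq := dotProduct_mulVec_comm hC p.2 (C *ᵥ p.2)
  have hdot := dotProduct_comm p.1 (C *ᵥ p.2)
  simp only [pairForm, pairShift_apply, dotProduct_sub, sub_dotProduct, Matrix.mulVec_sub]
  linarith

lemma pairForm_pairShift_zpow (hC : C.IsSymm) (n : ℤ) (p : (ι → ℤ) × (ι → ℤ)) :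
    pairForm C ((pairShift C ^ n) p) = pairForm C p := by
  induction n generalizing p with
  | zero => rfl
  | succ n ih => rw [zpow_add_one, Equiv.Perm.mul_apply, ih, pairForm_pairShift hC]
  | pred n ih =>
    rw [zpow_sub_one, Equiv.Perm.mul_apply, ih, ← pairForm_pairShift hC,
      Equiv.Perm.inv_def, Equiv.apply_symm_apply]

variable [DecidableEq ι]

lemma pairShift_zpow_apply (n : ℤ) (p : (ι → ℤ) × (ι → ℤ)) :
    (pairShift C ^ n) p =
      (chebMatrix C (n - 1) *ᵥ p.2 - chebMatrix C (n - 2) *ᵥ p.1,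
        chebMatrix C n *ᵥ p.2 - chebMatrix C (n - 1) *ᵥ p.1) := by
  have hrec (m : ℤ) (x : ι → ℤ) :
      chebMatrix C m *ᵥ x = chebMatrix C (m - 1) *ᵥ C *ᵥ x - chebMatrix C (m - 2) *ᵥ x := by
    have h := chebMatrix_add_two C (m - 2)
    rw [sub_add_cancel, ← chebMatrix_mul_comm, show m - 2 + 1 = m - 1 by ring] at h
    rw [h, Matrix.sub_mulVec, ← Matrix.mulVec_mulVec]
  induction n generalizing p with
  | zero =>
    have hneg_two : chebMatrix C (-2) = -1 := by simpa using chebMatrix_neg_sub_two C 0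
    simp [hneg_two, Matrix.neg_mulVec]
  | succ n ih =>
    rw [zpow_add_one, Equiv.Perm.mul_apply, ih, pairShift_apply, hrec (n + 1), hrec (n + 1 - 1),
      show (n + 1 - 2 : ℤ) = n - 1 by ring, add_sub_cancel_right]
    simp only [Matrix.mulVec_sub]
    ext <;> simp <;> ring
  | pred n ih =>
    rw [zpow_sub_one, Equiv.Perm.mul_apply, ih, pairShift_inv_apply, hrec (-n), hrec (-n - 1),
      show (-n - 1 - 1 : ℤ) = -n - 2 by ring]
    simp only [Matrix.mulVec_sub]
    ext <;> simp

lemma pairShift_zpow_zero_single (n : ℤ) (i : ι) :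
    (pairShift C ^ n) (0, Pi.single i 1) =
      ((chebMatrix C (n - 1)).col i, (chebMatrix C n).col i) := by
  simp [pairShift_zpow_apply]

lemma exists_eq_single_one {x : ι → ℤ} (hx : 0 ≤ x) (h : x ⬝ᵥ x = 1) :
    ∃ i, x = Pi.single i 1 := by
  obtain ⟨i, hi⟩ : ∃ i, x i ≠ 0 := by
    by_contra! h0
    simp [dotProduct, h0] at h
  have hi : 1 ≤ x i := by have := hx i; simp only [Pi.zero_apply] at this; lia
  rw [dotProduct, ← Finset.add_sum_erase _ _ (Finset.mem_univ i)] at h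
  have hnonneg : ∀ j ∈ Finset.univ.erase i, 0 ≤ x j * x j := fun j _ => mul_self_nonneg _
  have hrest : ∑ j ∈ Finset.univ.erase i, x j * x j = 0 := by
    nlinarith [Finset.sum_nonneg hnonneg]
  refine ⟨i, funext fun j => ?_⟩
  rcases eq_or_ne j i with rfl | hj
  · rw [Pi.single_eq_same]
    nlinarith
  · rw [Pi.single_eq_of_ne hj]
    exact mul_self_eq_zero.1
      ((Finset.sum_eq_zero_iff_of_nonneg hnonneg).1 hrest j (by simp [hj]))

variable {D : ℕ}

namespace ChebyshevPositiveUpTo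

lemma nonneg_of_le_add_one (hD : ChebyshevPositiveUpTo C D) {n : ℕ} (hn : n ≤ D + 1) (i j : ι) :
    0 ≤ chebMatrix C n i j := by
  rcases hn.lt_or_eq with hlt | rfl
  · exact hD.nonneg n (by lia) i j
  · simp [hD.eq_zero]

lemma chebMatrix_add_two_eq (hD : ChebyshevPositiveUpTo C D) :
    chebMatrix C (D + 2) = -chebMatrix C D := by
  rw [chebMatrix_add_two, hD.eq_zero, Matrix.mul_zero, zero_sub]

lemma pairShift_zpow_neg_apply (hD : ChebyshevPositiveUpTo C D) (p : (ι → ℤ) × (ι → ℤ)) :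
    (pairShift C ^ (-(D + 2) : ℤ)) p = -(chebMatrix C D *ᵥ p.1, chebMatrix C D *ᵥ p.2) := by
  have h0 : chebMatrix C (-(D + 2)) = -chebMatrix C D := by
    rw [← chebMatrix_neg_sub_two]; ring_nf
  have h1 : chebMatrix C (-(D + 2) - 1) = 0 := by
    rw [← neg_eq_zero, ← hD.eq_zero, ← chebMatrix_neg_sub_two]; ring_nf
  have h2 : chebMatrix C (-(D + 2) - 2) = chebMatrix C D := by
    rw [chebMatrix_neg_sub_two, hD.chebMatrix_add_two_eq, neg_neg]
  rw [pairShift_zpow_apply, h0, h1, h2]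
  simp [Matrix.neg_mulVec]

lemma eq_zero_of_mulVec_eq_zero (hC : C.IsSymm) (hD : ChebyshevPositiveUpTo C D) {n : ℕ}
    (hn : n ≤ D) {x : ι → ℤ} (hx : 0 ≤ x) (h : chebMatrix C n *ᵥ x = 0) : x = 0 := by
  rw [← (isSymm_chebMatrix hC n).eq, Matrix.mulVec_transpose] at h
  ext i
  by_contra hi
  exact hD.row_ne_zero n hn i (row_eq_zero_of_vecMul_eq_zero hx (hD.nonneg n hn) hi h)

lemma not_nonneg_pairShift_zpow_neg (hC : C.IsSymm) (hD : ChebyshevPositiveUpTo C D)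
    {p : (ι → ℤ) × (ι → ℤ)} (hp : 0 ≤ p) (h1 : pairForm C p = 1) :
    ¬ 0 ≤ (pairShift C ^ (-(D + 2) : ℤ)) p := by
  rw [hD.pairShift_zpow_neg_apply, neg_nonneg]
  rintro ⟨hle₁, hle₂⟩
  have hmulVec {x : ι → ℤ} (hx : 0 ≤ x) (hle : chebMatrix C D *ᵥ x ≤ 0) : x = 0 :=
    hD.eq_zero_of_mulVec_eq_zero hC le_rfl hx
      (hle.antisymm fun i => dotProduct_nonneg_of_nonneg (hD.nonneg D le_rfl i) hx)
  simp [pairForm, hmulVec hp.1 hle₁, hmulVec hp.2 hle₂] at h1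

lemma nonneg_pairShift_zpow_zero_single (hD : ChebyshevPositiveUpTo C D) {n : ℕ} (hn : n ≤ D + 1)
    (i : ι) : 0 ≤ (pairShift C ^ (n : ℤ)) (0, Pi.single i 1) := by
  rw [pairShift_zpow_zero_single]
  refine ⟨fun j => ?_, fun j => hD.nonneg_of_le_add_one hn j i⟩
  cases n with
  | zero => simp
  | succ n => simpa using hD.nonneg_of_le_add_one (n := n) (by lia) j i

lemma exists_eq_pairShift_zpow_zero_single (hC : C.IsSymm) (hD : ChebyshevPositiveUpTo C D)
    (hsign : ∀ p, pairForm C p = 1 → 0 ≤ p ∨ p ≤ 0) {p : (ι → ℤ) × (ι → ℤ)} (hp : 0 ≤ p)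
    (h1 : pairForm C p = 1) :
    ∃ i, ∃ n ≤ D + 1, p = (pairShift C ^ (n : ℤ)) (0, Pi.single i 1) := by
  classical
  have hex : ∃ n : ℕ, ¬ 0 ≤ (pairShift C ^ (-n : ℤ)) p :=
    ⟨D + 2, mod_cast hD.not_nonneg_pairShift_zpow_neg hC hp h1⟩
  have hle : Nat.find hex ≤ D + 2 :=
    Nat.find_min' hex (mod_cast hD.not_nonneg_pairShift_zpow_neg hC hp h1)
  obtain ⟨n, hn⟩ := Nat.exists_eq_succ_of_ne_zero
    ((Nat.find_eq_zero hex).not.2 (by simpa using hp))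
  have hlast : 0 ≤ (pairShift C ^ (-n : ℤ)) p := not_not.1 (Nat.find_min hex (m := n) (by lia))
  have hneg : ¬ 0 ≤ (pairShift C ^ (-(n + 1 : ℕ) : ℤ)) p := by
    simpa only [hn] using Nat.find_spec hex
  generalize hq : (pairShift C ^ (-n : ℤ)) p = q at hlast
  have hqform : pairForm C q = 1 := by rw [← hq, pairForm_pairShift_zpow hC, h1]
  have hpred : (pairShift C ^ (-(n + 1 : ℕ) : ℤ)) p = (C *ᵥ q.1 - q.2, q.1) := by
    rw [← hq, ← pairShift_inv_apply, ← zpow_neg_one, ← Equiv.Perm.mul_apply, ← zpow_add]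
    push_cast
    ring_nf
  have hq1 : q.1 = 0 := by
    have hnonpos := (hsign _ (by rw [pairForm_pairShift_zpow hC, h1])).resolve_left hneg
    rw [hpred] at hnonpos
    exact hnonpos.2.antisymm hlast.1
  obtain ⟨i, hi⟩ := exists_eq_single_one (x := q.2) hlast.2
    (by simpa [pairForm, hq1] using hqform)
  refine ⟨i, n, by lia, ?_⟩
  rw [← hi, ← hq1, ← hq, ← Equiv.Perm.mul_apply, ← zpow_add, add_neg_cancel, zpow_zero,
    Equiv.Perm.one_apply]

lemma pairShift_zpow_zero_single_inj (hC : C.IsSymm) (hD : ChebyshevPositiveUpTo C D)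
    {i j : ι} {s t : ℕ} (hst : s ≤ t) (ht : t ≤ D + 1)
    (h : (pairShift C ^ (s : ℤ)) (0, Pi.single i 1) = (pairShift C ^ (t : ℤ)) (0, Pi.single j 1)) :
    s = t ∧ i = j := by
  obtain ⟨m, rfl⟩ := Nat.exists_eq_add_of_le hst
  rw [Nat.cast_add, zpow_add, Equiv.Perm.mul_apply, Equiv.apply_eq_iff_eq,
    pairShift_zpow_zero_single, Prod.mk.injEq] at h
  cases m with
  | zero =>
    have hij := congrFun h.2 i
    simp_all [Matrix.one_apply]
  | succ m =>
    have hcol : (0 : ι → ℤ) = (chebMatrix C m).col j := by simpa using h.1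
    rw [← Matrix.mulVec_single_one] at hcol
    have hzero := hD.eq_zero_of_mulVec_eq_zero hC (n := m) (by lia)
      (Pi.single_nonneg.2 zero_le_one) hcol.symm
    simp at hzero

/-- Moving a positive pair backwards along `pairShift`, sign coherence makes it leave the positive
cone through a pair `(0, eᵢ)`. -/
theorem ncard_positive_pairs (hC : C.IsSymm) (hD : ChebyshevPositiveUpTo C D)
    (hsign : ∀ p, pairForm C p = 1 → 0 ≤ p ∨ p ≤ 0) :
    {p | 0 ≤ p ∧ pairForm C p = 1}.ncard = Fintype.card ι * (D + 2) := by
  have hbij : Set.BijOn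
      (fun q : ι × Fin (D + 2) => (pairShift C ^ ((q.2 : ℕ) : ℤ)) (0, Pi.single q.1 1))
      Set.univ {p | 0 ≤ p ∧ pairForm C p = 1} := by
    refine ⟨fun ⟨i, n⟩ _ => ⟨?_, ?_⟩, fun ⟨i, s⟩ _ ⟨j, t⟩ _ h => ?_, fun p ⟨hp, h1⟩ => ?_⟩
    · exact hD.nonneg_pairShift_zpow_zero_single (by lia) i
    · rw [pairForm_pairShift_zpow hC]
      simp [pairForm]
    · rcases le_total s t with hst | hst
      · obtain ⟨hst, rfl⟩ := hD.pairShift_zpow_zero_single_inj hC hst (by lia) h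
        rw [Fin.ext hst]
      · obtain ⟨hst, rfl⟩ := hD.pairShift_zpow_zero_single_inj hC hst (by lia) h.symm
        rw [Fin.ext hst]
    · obtain ⟨i, n, hn, rfl⟩ := hD.exists_eq_pairShift_zpow_zero_single hC hsign hp h1
      exact ⟨(i, ⟨n, by lia⟩), Set.mem_univ _, rfl⟩
  rw [← hbij.image_eq, Set.InjOn.ncard_image hbij.injOn, Set.ncard_univ]
  simp

end ChebyshevPositiveUpTo

end PositivePairs

/-! ### Roots of the Tits form -/

namespace FinQuiver

variable {Q : FinQuiver}

/-- The arrows of the double quiver: `Sum.inl α` is `α` and `Sum.inr α` is its reverse `α*`. -/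
abbrev DoubleArrow (Q : FinQuiver) : Type := Q.Arrow ⊕ Q.Arrow

namespace DoubleArrow

/-- The source of an arrow of the double quiver. -/
def src : Q.DoubleArrow → Fin Q.r := Sum.elim Q.src Q.tgt

/-- The target of an arrow of the double quiver. -/
def tgt : Q.DoubleArrow → Fin Q.r := Sum.elim Q.tgt Q.src

/-- The reversal `α ↔ α*` of arrows of the double quiver. -/
def rev : Q.DoubleArrow → Q.DoubleArrow := Sum.swap

@[simp] lemma src_inl (e : Q.Arrow) : src (.inl e) = Q.src e := rfl

@[simp] lemma src_inr (e : Q.Arrow) : src (.inr e) = Q.tgt e := rfl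

@[simp] lemma tgt_inl (e : Q.Arrow) : tgt (.inl e) = Q.tgt e := rfl

@[simp] lemma tgt_inr (e : Q.Arrow) : tgt (.inr e) = Q.src e := rfl

@[simp] lemma src_rev (a : Q.DoubleArrow) : a.rev.src = a.tgt := by cases a <;> rfl

@[simp] lemma tgt_rev (a : Q.DoubleArrow) : a.rev.tgt = a.src := by cases a <;> rfl

end DoubleArrow

lemma doubleAdj_eq_sum_single :
    Q.doubleAdj = ∑ a : Q.DoubleArrow, Matrix.single a.src a.tgt 1 := by
  ext i j
  rw [Fintype.sum_sum_type, Matrix.add_apply]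
  simp [doubleAdj, adjMatrix, Fintype.card_subtype, Matrix.sum_apply, Matrix.single_apply,
    and_comm]

lemma vecMul_doubleAdj (g : Fin Q.r → ℕ) (j : Fin Q.r) :
    (g ᵥ* Q.doubleAdj) j = ∑ a : {a : Q.DoubleArrow // a.tgt = j}, g a.1.src := by
  have hsingle (a : Q.DoubleArrow) :
      (g ᵥ* Matrix.single a.src a.tgt 1) j = if a.tgt = j then g a.src else 0 := by
    simp [Matrix.vecMul, dotProduct, Matrix.single_apply, ite_and]
  rw [doubleAdj_eq_sum_single, Matrix.vecMul_sum, Finset.sum_apply,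
    ← Finset.sum_subtype (Finset.univ.filter fun a : Q.DoubleArrow => a.tgt = j) (by simp)
      (fun a => g a.src), Finset.sum_filter]
  exact Finset.sum_congr rfl fun a _ => hsingle a

/-- The adjacency matrix of the double quiver with integer entries. -/
def adjZ (Q : FinQuiver) : Matrix (Fin Q.r) (Fin Q.r) ℤ := Q.doubleAdj.map Nat.cast

lemma adjZ_nonneg (i j : Fin Q.r) : 0 ≤ Q.adjZ i j := by simp [adjZ]

lemma isSymm_adjZ : Q.adjZ.IsSymm := by
  ext i j
  simp [adjZ, doubleAdj, add_comm]

lemma dotProduct_adjZ_mulVec (x y : Fin Q.r → ℤ) :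
    x ⬝ᵥ Q.adjZ *ᵥ y =
      ∑ e : Q.Arrow, (x (Q.src e) * y (Q.tgt e) + x (Q.tgt e) * y (Q.src e)) := by
  have h : Q.adjZ = ∑ a : Q.DoubleArrow, Matrix.single a.src a.tgt 1 := by
    ext; simp [adjZ, doubleAdj_eq_sum_single, Matrix.sum_apply, Matrix.single_apply,
      -Fintype.sum_sum_type]
  rw [h, Matrix.sum_mulVec, dotProduct_sum, Fintype.sum_sum_type, ← Finset.sum_add_distrib]
  refine Finset.sum_congr rfl fun e _ => ?_
  simp [dotProduct, Matrix.mulVec, Matrix.single_apply, ite_and]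

lemma adjZ_src_tgt_ne_zero (e : Q.Arrow) : Q.adjZ (Q.src e) (Q.tgt e) ≠ 0 := by
  have : Nonempty {e' : Q.Arrow // Q.src e' = Q.src e ∧ Q.tgt e' = Q.tgt e} := ⟨e, rfl, rfl⟩
  have hcard : Q.adjMatrix (Q.src e) (Q.tgt e) ≠ 0 := Fintype.card_ne_zero
  rw [adjZ, Matrix.map_apply, doubleAdj, Matrix.of_apply, Nat.cast_ne_zero]
  lia

lemma reflTransGen_adjZ_ne_zero (hconn : Q.Connected) (i j : Fin Q.r) :
    Relation.ReflTransGen (fun a b => Q.adjZ a b ≠ 0) i j := by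
  refine Relation.ReflTransGen.mono ?_ i j (hconn i j)
  rintro a b ⟨e, ⟨rfl, rfl⟩ | ⟨rfl, rfl⟩⟩
  · exact adjZ_src_tgt_ne_zero e
  · rw [isSymm_adjZ.apply]
    exact adjZ_src_tgt_ne_zero e

lemma one_le_titsFormZ (hQ : Q.IsDynkin) {x : Fin Q.r → ℤ} (hx : x ≠ 0) :
    1 ≤ Q.titsFormZ x := by
  have hcast : Q.titsForm (fun i => (x i : ℝ)) = (Q.titsFormZ x : ℝ) := by
    simp [titsForm, titsFormZ]
  have hpos := hQ (fun i => (x i : ℝ)) fun h => hx (funext fun i => by simpa using congrFun h i)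
  rw [hcast] at hpos
  exact_mod_cast hpos

@[simp] lemma titsFormZ_zero : Q.titsFormZ 0 = 0 := by simp [titsFormZ]

lemma titsFormZ_neg (x : Fin Q.r → ℤ) : Q.titsFormZ (-x) = Q.titsFormZ x := by
  simp [titsFormZ]

lemma titsFormZ_posPart_add_negPart_le (x : Fin Q.r → ℤ) :
    Q.titsFormZ x⁺ + Q.titsFormZ x⁻ ≤ Q.titsFormZ x := by
  have hsub (i : Fin Q.r) : x i = x⁺ i - x⁻ i := by
    rw [← Pi.sub_apply, posPart_sub_negPart]
  have hpos (i : Fin Q.r) : 0 ≤ x⁺ i := posPart_nonneg (x i)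
  have hneg (i : Fin Q.r) : 0 ≤ x⁻ i := negPart_nonneg (x i)
  have hsq (i : Fin Q.r) : x i ^ 2 = x⁺ i ^ 2 + x⁻ i ^ 2 := by
    rcases le_total 0 (x i) with h | h <;> simp [Pi.posPart_apply, Pi.negPart_apply, h]
  have harrow : ∑ e : Q.Arrow, x (Q.src e) * x (Q.tgt e) ≤
      ∑ e : Q.Arrow, (x⁺ (Q.src e) * x⁺ (Q.tgt e) + x⁻ (Q.src e) * x⁻ (Q.tgt e)) := by
    refine Finset.sum_le_sum fun e _ => ?_
    rw [hsub (Q.src e), hsub (Q.tgt e)]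
    nlinarith [mul_nonneg (hpos (Q.src e)) (hneg (Q.tgt e)),
      mul_nonneg (hneg (Q.src e)) (hpos (Q.tgt e))]
  simp only [titsFormZ, hsq]
  rw [Finset.sum_add_distrib] at harrow ⊢
  linarith

lemma eq_zero_or_eq_zero_of_titsFormZ_add_le_one (hQ : Q.IsDynkin) {u v : Fin Q.r → ℤ}
    (h : Q.titsFormZ u + Q.titsFormZ v ≤ 1) : u = 0 ∨ v = 0 := by
  by_contra! huv
  have := one_le_titsFormZ hQ huv.1
  have := one_le_titsFormZ hQ huv.2
  lia

lemma nonneg_or_nonpos_of_titsFormZ_eq_one (hQ : Q.IsDynkin) {x : Fin Q.r → ℤ}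
    (hx : Q.titsFormZ x = 1) : 0 ≤ x ∨ x ≤ 0 := by
  have h := titsFormZ_posPart_add_negPart_le x
  rcases eq_zero_or_eq_zero_of_titsFormZ_add_le_one hQ (hx ▸ h) with hp | hn
  · exact Or.inr (posPart_eq_zero.1 hp)
  · exact Or.inl (negPart_eq_zero.1 hn)

lemma titsFormZ_posPart_add_negPart (hQ : Q.IsDynkin) {x : Fin Q.r → ℤ}
    (hx : Q.titsFormZ x = 1) : Q.titsFormZ x⁺ + Q.titsFormZ x⁻ = 1 := by
  rcases nonneg_or_nonpos_of_titsFormZ_eq_one hQ hx with h | h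
  · rw [posPart_of_nonneg h, negPart_of_nonneg h, hx, titsFormZ_zero, add_zero]
  · rw [posPart_of_nonpos h, negPart_of_nonpos h, titsFormZ_neg, hx, titsFormZ_zero, zero_add]

lemma src_ne_tgt (hQ : Q.Acyclic) (e : Q.Arrow) : Q.src e ≠ Q.tgt e := fun h =>
  hQ (Q.src e) (.single ⟨e, rfl, h.symm⟩)

lemma card_arrow_lt [Nonempty (Fin Q.r)] (hQ : Q.IsDynkin) : Fintype.card Q.Arrow < Q.r := by
  have h := one_le_titsFormZ hQ (x := 1) one_ne_zero
  simp only [titsFormZ, Pi.one_apply, one_pow, mul_one, Finset.sum_const, Finset.card_univ,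
    Fintype.card_fin, nsmul_eq_mul] at h
  lia

/-- The simple graph underlying a quiver. -/
def underlyingGraph (Q : FinQuiver) : SimpleGraph (Fin Q.r) :=
  SimpleGraph.fromRel fun a b => ∃ e : Q.Arrow, Q.src e = a ∧ Q.tgt e = b

lemma underlyingGraph_adj (hacyc : Q.Acyclic) (e : Q.Arrow) :
    Q.underlyingGraph.Adj (Q.src e) (Q.tgt e) :=
  ⟨src_ne_tgt hacyc e, Or.inl ⟨e, rfl, rfl⟩⟩

lemma connected_underlyingGraph [Nonempty (Fin Q.r)] (hconn : Q.Connected) (hacyc : Q.Acyclic) :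
    Q.underlyingGraph.Connected := by
  refine ⟨fun i j => ?_⟩
  induction hconn i j with
  | refl => exact .refl _
  | tail _ he ih =>
    obtain ⟨e, ⟨rfl, rfl⟩ | ⟨rfl, rfl⟩⟩ := he
    · exact ih.trans (underlyingGraph_adj hacyc e).reachable
    · exact ih.trans (underlyingGraph_adj hacyc e).symm.reachable

lemma card_edgeSet_underlyingGraph_le (hacyc : Q.Acyclic) :
    Nat.card Q.underlyingGraph.edgeSet ≤ Fintype.card Q.Arrow := by
  rw [← Nat.card_eq_fintype_card]
  refine Nat.card_le_card_of_surjective (fun e : Q.Arrow =>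
    (⟨s(Q.src e, Q.tgt e), underlyingGraph_adj hacyc e⟩ : Q.underlyingGraph.edgeSet)) ?_
  rintro ⟨⟨a, b⟩, -, ⟨e, ha, hb⟩ | ⟨e, hb, ha⟩⟩
  · exact ⟨e, Subtype.ext (congrArg₂ Sym2.mk ha hb)⟩
  · exact ⟨e, Subtype.ext (Sym2.eq_swap.trans (congrArg₂ Sym2.mk ha hb))⟩

/-- A connected graph with fewer edges than vertices is a tree, hence bipartite. -/
theorem exists_bicoloring [Nonempty (Fin Q.r)] (hconn : Q.Connected) (hacyc : Q.Acyclic)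
    (hQ : Q.IsDynkin) : ∃ κ : Fin Q.r → Bool, ∀ e, κ (Q.src e) ≠ κ (Q.tgt e) := by
  have hG := connected_underlyingGraph hconn hacyc
  have hle := hG.card_vert_le_card_edgeSet_add_one
  have htree : Q.underlyingGraph.IsTree := by
    refine SimpleGraph.isTree_iff_connected_and_card.2 ⟨hG, le_antisymm ?_ hle⟩
    rw [Nat.card_fin]
    exact (Nat.succ_le_succ (card_edgeSet_underlyingGraph_le hacyc)).trans (card_arrow_lt hQ)
  let c := htree.isBipartite.toColoring (α := Bool) (by simp)
  exact ⟨c, fun e => c.valid (underlyingGraph_adj hacyc e)⟩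

/-- The involution exchanging the entries of a pair of vectors at the vertices of one colour. -/
def colorSwap (κ : Fin Q.r → Bool) : Equiv.Perm ((Fin Q.r → ℤ) × (Fin Q.r → ℤ)) :=
  Function.Involutive.toPerm
    (fun p => (fun i => if κ i then p.1 i else p.2 i, fun i => if κ i then p.2 i else p.1 i))
    (fun p => by ext i <;> by_cases h : κ i <;> simp [h])

variable {κ : Fin Q.r → Bool}

lemma colorSwap_apply (p : (Fin Q.r → ℤ) × (Fin Q.r → ℤ)) : colorSwap κ p =
    (fun i => if κ i then p.1 i else p.2 i, fun i => if κ i then p.2 i else p.1 i) := rfl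

lemma colorSwap_neg (p : (Fin Q.r → ℤ) × (Fin Q.r → ℤ)) : colorSwap κ (-p) = -colorSwap κ p := by
  ext i <;> by_cases h : κ i <;> simp [colorSwap_apply, h]

lemma colorSwap_nonneg_iff {p : (Fin Q.r → ℤ) × (Fin Q.r → ℤ)} : 0 ≤ colorSwap κ p ↔ 0 ≤ p := by
  simp only [Prod.le_def, Pi.le_def, colorSwap_apply, ← forall_and]
  refine forall_congr' fun i => ?_
  by_cases h : κ i <;> simp [h, and_comm]

lemma titsFormZ_add_titsFormZ_colorSwap (hκ : ∀ e, κ (Q.src e) ≠ κ (Q.tgt e))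
    (p : (Fin Q.r → ℤ) × (Fin Q.r → ℤ)) :
    Q.titsFormZ (colorSwap κ p).1 + Q.titsFormZ (colorSwap κ p).2 = pairForm Q.adjZ p := by
  have hsq : ∑ i, (colorSwap κ p).1 i ^ 2 + ∑ i, (colorSwap κ p).2 i ^ 2 =
      p.1 ⬝ᵥ p.1 + p.2 ⬝ᵥ p.2 := by
    simp only [dotProduct, ← Finset.sum_add_distrib, colorSwap_apply]
    refine Finset.sum_congr rfl fun i _ => ?_
    split_ifs <;> ring
  have harrow : ∑ e, (colorSwap κ p).1 (Q.src e) * (colorSwap κ p).1 (Q.tgt e) +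
      ∑ e, (colorSwap κ p).2 (Q.src e) * (colorSwap κ p).2 (Q.tgt e) =
      p.1 ⬝ᵥ Q.adjZ *ᵥ p.2 := by
    rw [dotProduct_adjZ_mulVec, ← Finset.sum_add_distrib]
    refine Finset.sum_congr rfl fun e _ => ?_
    have hne := hκ e
    cases hs : κ (Q.src e) <;> cases ht : κ (Q.tgt e) <;>
      simp_all [colorSwap_apply, mul_comm, add_comm]
  rw [pairForm, ← hsq, ← harrow, titsFormZ, titsFormZ]
  ring

lemma nonneg_or_nonpos_of_pairForm_eq_one (hQ : Q.IsDynkin)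
    (hκ : ∀ e, κ (Q.src e) ≠ κ (Q.tgt e)) {p : (Fin Q.r → ℤ) × (Fin Q.r → ℤ)}
    (h : pairForm Q.adjZ p = 1) : 0 ≤ p ∨ p ≤ 0 := by
  rw [← titsFormZ_add_titsFormZ_colorSwap hκ] at h
  rw [← neg_nonneg (a := p), ← colorSwap_nonneg_iff (κ := κ) (p := p),
    ← colorSwap_nonneg_iff (κ := κ) (p := -p), colorSwap_neg]
  generalize colorSwap κ p = q at h ⊢
  obtain ⟨u, v⟩ := q
  rcases eq_zero_or_eq_zero_of_titsFormZ_add_le_one hQ h.le with rfl | rfl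
  · rw [titsFormZ_zero, zero_add] at h
    simpa [Prod.le_def] using nonneg_or_nonpos_of_titsFormZ_eq_one hQ h
  · rw [titsFormZ_zero, add_zero] at h
    simpa [Prod.le_def] using nonneg_or_nonpos_of_titsFormZ_eq_one hQ h

lemma exists_posPart_negPart_eq (hQ : Q.IsDynkin) {u v : Fin Q.r → ℤ} (hu : 0 ≤ u) (hv : 0 ≤ v)
    (h : Q.titsFormZ u + Q.titsFormZ v = 1) : ∃ x, Q.titsFormZ x = 1 ∧ x⁺ = u ∧ x⁻ = v := by
  rcases eq_zero_or_eq_zero_of_titsFormZ_add_le_one hQ h.le with rfl | rfl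
  · refine ⟨-v, ?_, by simpa using hv, by rwa [negPart_neg, posPart_of_nonneg]⟩
    simpa [titsFormZ_neg] using h
  · exact ⟨u, by simpa using h, posPart_of_nonneg hu, negPart_of_nonneg hu⟩

/-- A root `x` corresponds to the pair `(x⁺, x⁻)` after exchanging entries at one colour. -/
lemma ncard_roots_eq_ncard_positive_pairs (hQ : Q.IsDynkin)
    (hκ : ∀ e, κ (Q.src e) ≠ κ (Q.tgt e)) :
    {x | Q.titsFormZ x = 1}.ncard = {p | 0 ≤ p ∧ pairForm Q.adjZ p = 1}.ncard := by
  have hinj : Function.Injective fun x : Fin Q.r → ℤ => (colorSwap κ).symm (x⁺, x⁻) := by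
    intro x y hxy
    obtain ⟨hp, hn⟩ := Prod.ext_iff.1 ((colorSwap κ).symm.injective hxy)
    rw [← posPart_sub_negPart x, ← posPart_sub_negPart y]
    exact congrArg₂ _ hp hn
  rw [← Set.ncard_image_of_injective _ hinj]
  congr 1
  ext p
  simp only [Set.mem_image, Set.mem_ofPred_eq, Equiv.symm_apply_eq, Prod.ext_iff,
    ← titsFormZ_add_titsFormZ_colorSwap hκ, ← colorSwap_nonneg_iff (κ := κ) (p := p)]
  constructor
  · rintro ⟨x, hx, hp, hn⟩
    rw [← hp, ← hn, titsFormZ_posPart_add_negPart hQ hx]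
    exact ⟨⟨hp ▸ posPart_nonneg x, hn ▸ negPart_nonneg x⟩, rfl⟩
  · rintro ⟨hp, h⟩
    exact exists_posPart_negPart_eq hQ hp.1 hp.2 h

theorem ncard_roots (hQ : Q.IsDynkin) (hconn : Q.Connected) (hacyc : Q.Acyclic)
    [Nonempty (Fin Q.r)] {D : ℕ} (hD : ChebyshevPositiveUpTo Q.adjZ D) :
    {x | Q.titsFormZ x = 1}.ncard = Q.r * (D + 2) := by
  obtain ⟨κ, hκ⟩ := exists_bicoloring hconn hacyc hQ
  rw [ncard_roots_eq_ncard_positive_pairs hQ hκ, hD.ncard_positive_pairs isSymm_adjZ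
    fun _ => nonneg_or_nonpos_of_pairForm_eq_one hQ hκ, Fintype.card_fin]

end FinQuiver

/-! ### The grading of the preprojective algebra -/

namespace FinQuiver.DoubleArrow

variable {Q : FinQuiver}

@[simp] lemma rev_rev (a : Q.DoubleArrow) : a.rev.rev = a := Sum.swap_swap a

/-- The sign of an arrow of the double quiver in the mesh relation at its target. -/
def sign (k : Type) [Field k] : Q.DoubleArrow → k := Sum.elim (fun _ => -1) (fun _ => 1)

lemma sign_ne_zero (k : Type) [Field k] (a : Q.DoubleArrow) : a.sign k ≠ 0 := by
  cases a <;> simp [sign]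

/-- The generator of the free algebra given by an arrow of the double quiver. -/
def toGen : Q.DoubleArrow → PPGen Q := Sum.elim PPGen.fwd PPGen.bwd

end FinQuiver.DoubleArrow

lemma meshElem_eq_sum (k : Type) [Field k] (Q : FinQuiver) (i : Fin Q.r) :
    meshElem k Q i = ∑ a with FinQuiver.DoubleArrow.tgt a = i,
      a.sign k • (FreeAlgebra.ι k a.rev.toGen * FreeAlgebra.ι k a.toGen) := by
  rw [Finset.sum_filter, Fintype.sum_sum_type, add_comm, meshElem, sub_eq_add_neg,
    ← Finset.sum_neg_distrib]
  congr 1 <;> refine Finset.sum_congr rfl fun x _ => ?_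
  · by_cases h : Q.src x = i <;>
      simp [FinQuiver.DoubleArrow.sign, FinQuiver.DoubleArrow.rev, FinQuiver.DoubleArrow.toGen, h]
  · by_cases h : Q.tgt x = i <;>
      simp [FinQuiver.DoubleArrow.sign, FinQuiver.DoubleArrow.rev, FinQuiver.DoubleArrow.toGen, h]

/-- A family of elements `e i`, `α a` of an algebra satisfying the defining relations of `Π(Q)`,
with the mesh relation at `i` written as one sum over the arrows of the double quiver ending
at `i`. -/
structure IsPreprojFamily (k : Type) [Field k] {Q : FinQuiver} {B : Type*} [Semiring B]
    [Algebra k B] (e : Fin Q.r → B) (α : Q.DoubleArrow → B) : Prop where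
  idem : CompleteOrthogonalIdempotents e
  idem_mul (a) : e a.src * α a = α a
  mul_idem (a) : α a * e a.tgt = α a
  mesh (i) : ∑ a with FinQuiver.DoubleArrow.tgt a = i, a.sign k • (α a.rev * α a) = 0

namespace PreprojAlg

variable {k : Type} [Field k] {Q : FinQuiver}

section Presentation

variable {B : Type*}

/-- The map on generators given by its values on the trivial paths and on the arrows. -/
def genMap (e : Fin Q.r → B) (α : Q.DoubleArrow → B) : PPGen Q → B
  | .vert i => e i
  | .fwd x => α (.inl x)
  | .bwd x => α (.inr x)

/-- The element of `Π(Q)` given by an arrow of the double quiver. -/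
noncomputable def arrow (k : Type) [Field k] {Q : FinQuiver} (a : Q.DoubleArrow) :
    PreprojAlg k Q :=
  ppGen k Q a.toGen

@[simp] lemma genMap_toGen (e : Fin Q.r → B) (α : Q.DoubleArrow → B) (a : Q.DoubleArrow) :
    genMap e α a.toGen = α a := by
  cases a <;> rfl

variable [Semiring B] [Algebra k B]

lemma lift_genMap_meshElem (e : Fin Q.r → B) (α : Q.DoubleArrow → B) (i : Fin Q.r) :
    FreeAlgebra.lift k (genMap e α) (meshElem k Q i) =
      ∑ a with FinQuiver.DoubleArrow.tgt a = i, a.sign k • (α a.rev * α a) := by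
  simp [meshElem_eq_sum]

lemma ppGen_eq_genMap : ppGen k Q = genMap (ppIdem k Q) (arrow k) := by
  ext g
  cases g <;> rfl

lemma mkAlgHom_eq_lift_genMap : RingQuot.mkAlgHom k (PPRel k Q) =
    FreeAlgebra.lift k (genMap (ppIdem k Q) (arrow k)) := by
  ext g
  simp [← ppGen_eq_genMap, ppGen]

lemma lift_genMap_eq {x y : FreeAlgebra k (PPGen Q)} (h : PPRel k Q x y) :
    FreeAlgebra.lift k (genMap (ppIdem k Q) (arrow k)) x =
      FreeAlgebra.lift k (genMap (ppIdem k Q) (arrow k)) y := by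
  rw [← mkAlgHom_eq_lift_genMap]
  exact RingQuot.mkAlgHom_rel k h

theorem isPreprojFamily : IsPreprojFamily k (ppIdem k Q) (arrow k) where
  idem := {
    idem i := show _ = _ by simpa [genMap] using lift_genMap_eq (.vert_idem (k := k) i)
    ortho i j h := by simpa [genMap] using lift_genMap_eq (.vert_orth (k := k) i j h)
    complete := by simpa [genMap] using lift_genMap_eq (.vert_sum (k := k) (Q := Q)) }
  idem_mul
    | .inl x => by simpa [genMap] using lift_genMap_eq (.fwd_left (k := k) x)
    | .inr x => by simpa [genMap] using lift_genMap_eq (.bwd_left (k := k) x)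
  mul_idem
    | .inl x => by simpa [genMap] using lift_genMap_eq (.fwd_right (k := k) x)
    | .inr x => by simpa [genMap] using lift_genMap_eq (.bwd_right (k := k) x)
  mesh i := by simpa only [lift_genMap_meshElem, map_zero] using lift_genMap_eq (.mesh (k := k) i)

variable {e : Fin Q.r → B} {α : Q.DoubleArrow → B}

/-- The algebra homomorphism out of `Π(Q)` with prescribed values on trivial paths and arrows. -/
noncomputable def lift (h : IsPreprojFamily k e α) : PreprojAlg k Q →ₐ[k] B :=
  RingQuot.liftAlgHom k ⟨FreeAlgebra.lift k (genMap e α), fun x y hxy => by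
    cases hxy with
    | vert_idem i => simpa [genMap] using (h.idem.idem i).eq
    | vert_orth i j hij => simpa [genMap] using h.idem.ortho hij
    | vert_sum => simpa [genMap] using h.idem.complete
    | fwd_left x => simpa [genMap] using h.idem_mul (.inl x)
    | fwd_right x => simpa [genMap] using h.mul_idem (.inl x)
    | bwd_left x => simpa [genMap] using h.idem_mul (.inr x)
    | bwd_right x => simpa [genMap] using h.mul_idem (.inr x)
    | mesh i => rw [lift_genMap_meshElem, map_zero, h.mesh]⟩

lemma lift_ppGen (h : IsPreprojFamily k e α) (g : PPGen Q) :
    lift h (ppGen k Q g) = genMap e α g := by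
  simp [lift, ppGen, RingQuot.liftAlgHom_mkAlgHom_apply]

@[simp] lemma lift_ppIdem (h : IsPreprojFamily k e α) (i : Fin Q.r) :
    lift h (ppIdem k Q i) = e i :=
  lift_ppGen h _

@[simp] lemma lift_arrow (h : IsPreprojFamily k e α) (a : Q.DoubleArrow) :
    lift h (arrow k a) = α a :=
  (lift_ppGen h _).trans (genMap_toGen e α a)

lemma induction {p : PreprojAlg k Q → Prop} (algebraMap : ∀ c, p (algebraMap k _ c))
    (idem : ∀ i, p (ppIdem k Q i)) (arrow : ∀ a, p (arrow k a))
    (mul : ∀ x y, p x → p y → p (x * y)) (add : ∀ x y, p x → p y → p (x + y))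
    (x : PreprojAlg k Q) : p x := by
  obtain ⟨x, rfl⟩ := RingQuot.mkAlgHom_surjective k (PPRel k Q) x
  induction x with
  | grade0 c => simpa using algebraMap c
  | grade1 g =>
    cases g with
    | vert i => exact idem i
    | fwd x => exact arrow (.inl x)
    | bwd x => exact arrow (.inr x)
  | mul x y hx hy => simpa using mul _ _ hx hy
  | add x y hx hy => simpa using add _ _ hx hy

end Presentation

@[simp] lemma ppIdem_mul_self (i : Fin Q.r) : ppIdem k Q i * ppIdem k Q i = ppIdem k Q i :=
  isPreprojFamily.idem.idem i

lemma ppIdem_mul_of_ne {i j : Fin Q.r} (h : i ≠ j) : ppIdem k Q i * ppIdem k Q j = 0 :=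
  isPreprojFamily.idem.ortho h

lemma ppIdem_mul (i j : Fin Q.r) :
    ppIdem k Q i * ppIdem k Q j = if i = j then ppIdem k Q i else 0 :=
  isPreprojFamily.idem.toOrthogonalIdempotents.mul_eq i j

lemma sum_ppIdem : ∑ i, ppIdem k Q i = 1 := isPreprojFamily.idem.complete

@[simp] lemma ppIdem_src_mul_arrow (a : Q.DoubleArrow) : ppIdem k Q a.src * arrow k a = arrow k a :=
  isPreprojFamily.idem_mul a

@[simp] lemma arrow_mul_ppIdem_tgt (a : Q.DoubleArrow) : arrow k a * ppIdem k Q a.tgt = arrow k a :=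
  isPreprojFamily.mul_idem a

lemma arrow_mul_ppIdem (a : Q.DoubleArrow) (j : Fin Q.r) :
    arrow k a * ppIdem k Q j = if a.tgt = j then arrow k a else 0 := by
  split_ifs with h
  · rw [← h, arrow_mul_ppIdem_tgt]
  · rw [← arrow_mul_ppIdem_tgt, mul_assoc, ppIdem_mul_of_ne h, mul_zero]

section Grading

instance : SetLike.GradedMonoid (ppPiece k Q) where
  one_mem := Submodule.subset_span ⟨[], rfl, rfl⟩
  mul_mem m n x y hx hy := by
    have hle : ppPiece k Q m * ppPiece k Q n ≤ ppPiece k Q (m + n) := by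
      rw [ppPiece, ppPiece, Submodule.span_mul_span, Submodule.span_le]
      rintro _ ⟨_, ⟨l, rfl, rfl⟩, _, ⟨l', rfl, rfl⟩, rfl⟩
      exact Submodule.subset_span ⟨l ++ l', by simp, by simp⟩
    exact hle (Submodule.mul_mem_mul hx hy)

lemma mul_mem_ppPiece {m n : ℕ} {x y : PreprojAlg k Q} (hx : x ∈ ppPiece k Q m)
    (hy : y ∈ ppPiece k Q n) : x * y ∈ ppPiece k Q (m + n) :=
  SetLike.GradedMul.mul_mem hx hy

lemma ppGen_mem_ppPiece (g : PPGen Q) : ppGen k Q g ∈ ppPiece k Q (ppWt Q g) :=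
  Submodule.subset_span ⟨[g], by simp, by simp⟩

lemma ppIdem_mem_ppPiece (i : Fin Q.r) : ppIdem k Q i ∈ ppPiece k Q 0 := ppGen_mem_ppPiece (.vert i)

lemma arrow_mem_ppPiece (a : Q.DoubleArrow) : arrow k a ∈ ppPiece k Q 1 := by
  cases a with
  | inl x => exact ppGen_mem_ppPiece (.fwd x)
  | inr x => exact ppGen_mem_ppPiece (.bwd x)

/-- The embedding of a graded piece into the direct sum of the pieces. -/
noncomputable abbrev homogeneous (n : ℕ) {x : PreprojAlg k Q} (hx : x ∈ ppPiece k Q n) :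
    DirectSum ℕ fun n => ppPiece k Q n :=
  DirectSum.lof k ℕ (fun n => ppPiece k Q n) n ⟨x, hx⟩

lemma homogeneous_mul {m n p : ℕ} (h : m + n = p) {x y z : PreprojAlg k Q}
    (hx : x ∈ ppPiece k Q m) (hy : y ∈ ppPiece k Q n) (hz : z ∈ ppPiece k Q p) (hxy : x * y = z) :
    homogeneous m hx * homogeneous n hy = homogeneous p hz := by
  subst h hxy
  exact DirectSum.of_mul_of _ _

lemma isPreprojFamily_homogeneous : IsPreprojFamily k
    (fun i : Fin Q.r => homogeneous 0 (ppIdem_mem_ppPiece (k := k) i))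
    (fun a => homogeneous 1 (arrow_mem_ppPiece a)) where
  idem := {
    idem i := homogeneous_mul rfl _ _ _ (ppIdem_mul_self i)
    ortho i j h := (homogeneous_mul rfl _ _ (zero_mem _) (ppIdem_mul_of_ne h)).trans
      (map_zero (DirectSum.lof k ℕ (fun n => ppPiece k Q n) 0))
    complete := by
      rw [← map_sum]
      exact congrArg (DirectSum.lof k ℕ (fun n => ppPiece k Q n) 0)
        (Subtype.ext ((AddSubmonoidClass.coe_finsetSum _ _).trans sum_ppIdem)) }
  idem_mul a := homogeneous_mul (zero_add 1) _ _ _ (ppIdem_src_mul_arrow a)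
  mul_idem a := homogeneous_mul (add_zero 1) _ _ _ (arrow_mul_ppIdem_tgt a)
  mesh i := by
    have hmul (a : Q.DoubleArrow) : arrow k a.rev * arrow k a ∈ ppPiece k Q 2 :=
      mul_mem_ppPiece (m := 1) (n := 1) (arrow_mem_ppPiece a.rev) (arrow_mem_ppPiece a)
    have hterm (a : Q.DoubleArrow) : a.sign k •
        (homogeneous 1 (arrow_mem_ppPiece (k := k) a.rev) * homogeneous 1 (arrow_mem_ppPiece a)) =
        DirectSum.lof k ℕ (fun n => ppPiece k Q n) 2 (a.sign k • ⟨_, hmul a⟩) := by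
      rw [map_smul, homogeneous_mul (p := 2) rfl _ _ (hmul a) rfl]
    rw [Finset.sum_congr rfl fun a _ => hterm a, ← map_sum]
    refine (congrArg (DirectSum.lof k ℕ _ 2) (Subtype.ext ?_)).trans (map_zero _)
    simpa using isPreprojFamily.mesh (k := k) i

/-- The coaction `Π(Q) → ⨁ Π(Q)ₙ` of the grading by path length. -/
noncomputable def decomposeHom (k : Type) [Field k] (Q : FinQuiver) :
    PreprojAlg k Q →ₐ[k] DirectSum ℕ fun n => ppPiece k Q n :=
  lift isPreprojFamily_homogeneous

lemma decomposeHom_ppGen (g : PPGen Q) :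
    decomposeHom k Q (ppGen k Q g) = homogeneous (ppWt Q g) (ppGen_mem_ppPiece g) := by
  rw [decomposeHom, lift_ppGen]
  cases g <;> rfl

lemma decomposeHom_of_mem {n : ℕ} {x : PreprojAlg k Q} (hx : x ∈ ppPiece k Q n) :
    decomposeHom k Q x = homogeneous n hx := by
  induction hx using Submodule.span_induction with
  | mem x hx =>
    obtain ⟨l, rfl, rfl⟩ := hx
    induction l with
    | nil => exact map_one _
    | cons g l ih =>
      simp only [List.map_cons, List.prod_cons, map_mul]
      rw [decomposeHom_ppGen, ih]
      exact homogeneous_mul rfl _ _ _ rfl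
  | zero => rw [map_zero]; exact (map_zero (DirectSum.lof k ℕ (fun n => ppPiece k Q n) n)).symm
  | add x y hx hy ihx ihy => rw [map_add, ihx, ihy, ← map_add]; rfl
  | smul c x hx ih => rw [map_smul, ih, ← map_smul]; rfl

noncomputable instance : GradedAlgebra (ppPiece k Q) :=
  GradedAlgebra.ofAlgHom _ (decomposeHom k Q)
    (by
      ext g
      change DirectSum.coeAlgHom _ (decomposeHom k Q (ppGen k Q g)) = ppGen k Q g
      rw [decomposeHom_ppGen]
      exact DirectSum.coeAlgHom_of _ _ _)
    fun _ x => decomposeHom_of_mem x.2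

end Grading

/-! ### Exactness at the arrows -/

section Generation

/-- The projection of `Π(Q)` onto its component of degree `n`. -/
noncomputable abbrev proj (k : Type) [Field k] (Q : FinQuiver) (n : ℕ) :
    PreprojAlg k Q →ₗ[k] PreprojAlg k Q :=
  GradedAlgebra.proj (ppPiece k Q) n

lemma proj_mem (n : ℕ) (x : PreprojAlg k Q) : proj k Q n x ∈ ppPiece k Q n := SetLike.coe_mem _

lemma proj_of_mem {n : ℕ} {x : PreprojAlg k Q} (hx : x ∈ ppPiece k Q n) : proj k Q n x = x :=
  DirectSum.decompose_of_mem_same _ hx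

lemma proj_of_mem_of_ne {m n : ℕ} {x : PreprojAlg k Q} (hx : x ∈ ppPiece k Q m) (h : m ≠ n) :
    proj k Q n x = 0 :=
  DirectSum.decompose_of_mem_ne _ hx h

lemma proj_succ_mul_arrow (n : ℕ) (x : PreprojAlg k Q) (a : Q.DoubleArrow) :
    proj k Q (n + 1) (x * arrow k a) = proj k Q n x * arrow k a :=
  DirectSum.coe_decompose_mul_add_of_right_mem _ (arrow_mem_ppPiece a)

lemma proj_zero_mul_arrow (x : PreprojAlg k Q) (a : Q.DoubleArrow) :
    proj k Q 0 (x * arrow k a) = 0 :=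
  DirectSum.coe_decompose_mul_of_right_mem_of_not_le _ (arrow_mem_ppPiece a) (by simp)

lemma exists_eq_sum_add_sum_mul_arrow (x : PreprojAlg k Q) :
    ∃ (c : Fin Q.r → k) (w : Q.DoubleArrow → PreprojAlg k Q),
      x = ∑ i, c i • ppIdem k Q i + ∑ a, w a * arrow k a := by
  suffices h : ∀ s, (∃ (c : Fin Q.r → k) (w : Q.DoubleArrow → PreprojAlg k Q),
      s = ∑ i, c i • ppIdem k Q i + ∑ a, w a * arrow k a) →
      ∃ (c : Fin Q.r → k) (w : Q.DoubleArrow → PreprojAlg k Q),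
        s * x = ∑ i, c i • ppIdem k Q i + ∑ a, w a * arrow k a by
    simpa using h 1 ⟨1, 0, by simp [sum_ppIdem]⟩
  induction x using induction with
  | algebraMap t =>
    rintro _ ⟨c, w, rfl⟩
    exact ⟨t • c, t • w, by
      simp [← Algebra.commutes, ← Algebra.smul_def, Finset.smul_sum, mul_smul]⟩
  | idem j =>
    rintro _ ⟨c, w, rfl⟩
    refine ⟨Pi.single j (c j), fun a => if a.tgt = j then w a else 0, ?_⟩
    simp [add_mul, Finset.sum_mul, mul_assoc, arrow_mul_ppIdem, ppIdem_mul, Pi.single_apply,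
      -Fintype.sum_sum_type]
  | arrow b =>
    classical
    rintro s -
    exact ⟨0, Pi.single b s, by simp [Pi.single_apply]⟩
  | mul x y hx hy =>
    intro s hs
    simpa only [mul_assoc] using hy _ (hx s hs)
  | add x y hx hy =>
    intro s hs
    obtain ⟨c, w, h⟩ := hx s hs
    obtain ⟨c', w', h'⟩ := hy s hs
    refine ⟨c + c', w + w', ?_⟩
    simp only [mul_add, h, h', Pi.add_apply, add_smul, add_mul, Finset.sum_add_distrib]
    abel

lemma exists_eq_sum_smul_ppIdem {x : PreprojAlg k Q} (hx : x ∈ ppPiece k Q 0) :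
    ∃ c : Fin Q.r → k, x = ∑ i, c i • ppIdem k Q i := by
  obtain ⟨c, w, h⟩ := exists_eq_sum_add_sum_mul_arrow x
  refine ⟨c, ?_⟩
  rw [← proj_of_mem hx, h, map_add, map_sum, map_sum]
  simp only [map_smul, proj_of_mem (ppIdem_mem_ppPiece _), proj_zero_mul_arrow,
    Finset.sum_const_zero, add_zero]

lemma exists_eq_sum_mul_arrow {n : ℕ} {x : PreprojAlg k Q} (hx : x ∈ ppPiece k Q (n + 1)) :
    ∃ w : Q.DoubleArrow → PreprojAlg k Q,
      (∀ a, w a ∈ ppPiece k Q n) ∧ x = ∑ a, w a * arrow k a := by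
  obtain ⟨c, w, h⟩ := exists_eq_sum_add_sum_mul_arrow x
  refine ⟨fun a => proj k Q n (w a), fun a => proj_mem n _, ?_⟩
  rw [← proj_of_mem hx, h, map_add, map_sum, map_sum]
  simp only [map_smul, proj_of_mem_of_ne (ppIdem_mem_ppPiece _) n.succ_ne_zero.symm,
    proj_succ_mul_arrow, smul_zero, Finset.sum_const_zero, zero_add]

end Generation

section Exactness

/-- The left submodule of those `y` for which `∑ a, y a * a`, summed over the arrows `a` ending
at `j`, vanishes as a consequence of the composability and mesh relations. -/
def relations (k : Type) [Field k] {Q : FinQuiver} (j : Fin Q.r) :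
    Submodule (PreprojAlg k Q) (Q.DoubleArrow → PreprojAlg k Q) where
  carrier := {y | ∃ x, ∀ a, a.tgt = j → y a * ppIdem k Q a.src = a.sign k • (x * arrow k a.rev)}
  zero_mem' := ⟨0, by simp⟩
  add_mem' := by
    rintro y z ⟨x, hx⟩ ⟨w, hw⟩
    exact ⟨x + w, fun a ha => by simp [add_mul, hx a ha, hw a ha]⟩
  smul_mem' := by
    rintro c y ⟨x, hx⟩
    exact ⟨c * x, fun a ha => by simp [mul_assoc, hx a ha]⟩

/-- The module presented by generators `[a]`, one for each arrow ending at `j`, and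
`relations k j`. -/
def RadicalModule (k : Type) [Field k] {Q : FinQuiver} (j : Fin Q.r) : Type :=
  (Q.DoubleArrow → PreprojAlg k Q) ⧸ relations k j

variable {j : Fin Q.r}

noncomputable instance : AddCommGroup (RadicalModule k j) :=
  inferInstanceAs (AddCommGroup (_ ⧸ relations k j))

noncomputable instance : Module (PreprojAlg k Q) (RadicalModule k j) :=
  inferInstanceAs (Module (PreprojAlg k Q) (_ ⧸ relations k j))

noncomputable instance : Module k (RadicalModule k j) :=
  Module.compHom _ (algebraMap k (PreprojAlg k Q))

instance : IsScalarTower k (PreprojAlg k Q) (RadicalModule k j) :=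
  IsScalarTower.of_algebraMap_smul fun _ _ => rfl

/-- The class in `RadicalModule k j` of a family of coefficients. -/
noncomputable def toRadicalModule (k : Type) [Field k] {Q : FinQuiver} (j : Fin Q.r) :
    (Q.DoubleArrow → PreprojAlg k Q) →ₗ[PreprojAlg k Q] RadicalModule k j :=
  (relations k j).mkQ

lemma toRadicalModule_eq_zero {y : Q.DoubleArrow → PreprojAlg k Q} :
    toRadicalModule k j y = 0 ↔
      ∃ x, ∀ a, a.tgt = j → y a * ppIdem k Q a.src = a.sign k • (x * arrow k a.rev) :=
  Submodule.Quotient.mk_eq_zero _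

open Classical in
/-- The generator of `RadicalModule k j` given by an arrow. -/
noncomputable def generator (k : Type) [Field k] {Q : FinQuiver} (j : Fin Q.r)
    (a : Q.DoubleArrow) : RadicalModule k j :=
  toRadicalModule k j (Pi.single a 1)

lemma sum_smul_generator (y : Q.DoubleArrow → PreprojAlg k Q) :
    ∑ a, y a • generator k j a = toRadicalModule k j y := by
  classical
  simp only [generator, ← map_smul, ← map_sum]
  congr 1
  ext b
  simp [Finset.sum_apply, Pi.single_apply]

lemma generator_eq_zero {a : Q.DoubleArrow} (h : a.tgt ≠ j) : generator k j a = 0 := by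
  classical
  refine toRadicalModule_eq_zero.2 ⟨0, fun b hb => ?_⟩
  rw [Pi.single_eq_of_ne (by rintro rfl; exact h hb)]
  simp

lemma ppIdem_src_smul_generator (a : Q.DoubleArrow) :
    ppIdem k Q a.src • generator k j a = generator k j a := by
  classical
  rw [generator, ← map_smul, ← sub_eq_zero, ← map_sub, toRadicalModule_eq_zero]
  refine ⟨0, fun b _ => ?_⟩
  rcases eq_or_ne b a with rfl | h
  · simp [sub_mul]
  · simp [h]

lemma sum_sign_smul_arrow_rev_smul_generator (i : Fin Q.r) :
    ∑ a with FinQuiver.DoubleArrow.tgt a = i, a.sign k • arrow k a.rev • generator k j a = 0 := by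
  rcases eq_or_ne i j with rfl | hij
  · have h := sum_smul_generator (k := k) (j := i)
      fun a => if a.tgt = i then a.sign k • arrow k a.rev else 0
    simp only [ite_smul, zero_smul, smul_assoc, ← Finset.sum_filter] at h
    rw [h, toRadicalModule_eq_zero]
    refine ⟨1, fun a ha => ?_⟩
    have htgt := arrow_mul_ppIdem_tgt (k := k) a.rev
    rw [FinQuiver.DoubleArrow.tgt_rev] at htgt
    simp [ha, htgt]
  · refine Finset.sum_eq_zero fun a ha => ?_
    rw [generator_eq_zero (by rwa [(Finset.mem_filter.1 ha).2]), smul_zero, smul_zero]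

/-- The action of a trivial path on the extension of the simple module at `j`
by `RadicalModule k j`. -/
noncomputable def idemAction (k : Type) [Field k] {Q : FinQuiver} (j i : Fin Q.r) :
    Module.End k (RadicalModule k j × k) :=
  (Algebra.lsmul k k _ (ppIdem k Q i)).prodMap (if i = j then LinearMap.id else 0)

/-- The action of an arrow on the extension of the simple module at `j` by `RadicalModule k j`. -/
noncomputable def arrowAction (k : Type) [Field k] {Q : FinQuiver} (j : Fin Q.r)
    (a : Q.DoubleArrow) : Module.End k (RadicalModule k j × k) :=
  LinearMap.inl k _ _ ∘ₗ
    (Algebra.lsmul k k _ (arrow k a)).coprod (LinearMap.toSpanSingleton k _ (generator k j a))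

lemma idemAction_apply (i : Fin Q.r) (p : RadicalModule k j × k) :
    idemAction k j i p = (ppIdem k Q i • p.1, if i = j then p.2 else 0) := by
  rw [idemAction]
  split_ifs <;> rfl

lemma arrowAction_apply (a : Q.DoubleArrow) (p : RadicalModule k j × k) :
    arrowAction k j a p = (arrow k a • p.1 + p.2 • generator k j a, 0) := rfl

lemma isPreprojFamily_action (j : Fin Q.r) :
    IsPreprojFamily k (idemAction k j) (arrowAction k j) where
  idem := {
    idem i := LinearMap.ext fun p => by
      by_cases h : i = j <;> simp [idemAction_apply, smul_smul, h]
    ortho i i' h := LinearMap.ext fun p => by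
      simp only [Module.End.mul_apply, idemAction_apply, smul_smul, ppIdem_mul_of_ne h, zero_smul]
      split_ifs with hi hi' <;> simp_all
    complete := LinearMap.ext fun p => by
      rw [LinearMap.sum_apply]
      ext <;> simp [idemAction_apply, Prod.fst_sum, Prod.snd_sum, ← Finset.sum_smul, sum_ppIdem] }
  idem_mul a := LinearMap.ext fun p => by
    simp [idemAction_apply, arrowAction_apply, smul_smul, smul_comm (_ : PreprojAlg k Q) p.2,
      ppIdem_src_smul_generator]
  mul_idem a := LinearMap.ext fun p => by
    simp only [Module.End.mul_apply, idemAction_apply, arrowAction_apply, smul_smul,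
      arrow_mul_ppIdem_tgt]
    split_ifs with h
    · rfl
    · rw [generator_eq_zero h, smul_zero, smul_zero]
  mesh i := LinearMap.ext fun p => by
    have hmesh := congrArg (· • p.1) (isPreprojFamily.mesh (k := k) i)
    have hgen := congrArg (p.2 • ·) (sum_sign_smul_arrow_rev_smul_generator (k := k) (j := j) i)
    simp only [Finset.sum_smul, zero_smul, smul_assoc, mul_smul] at hmesh
    simp only [Finset.smul_sum, smul_zero] at hgen
    rw [LinearMap.sum_apply]
    ext
    · simp only [Prod.fst_sum, LinearMap.smul_apply, Module.End.mul_apply, arrowAction_apply,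
        Prod.smul_fst, smul_add, Finset.sum_add_distrib, zero_smul, add_zero, hmesh, zero_add,
        LinearMap.zero_apply, Prod.fst_zero]
      refine Eq.trans (Finset.sum_congr rfl fun a _ => ?_) hgen
      rw [smul_comm p.2, smul_comm p.2]
    · simp [Prod.snd_sum, arrowAction_apply, -Fintype.sum_sum_type]

/-- The action of `Π(Q)` on the extension of the simple module at `j` by `RadicalModule k j`. -/
noncomputable def action (j : Fin Q.r) :
    PreprojAlg k Q →ₐ[k] Module.End k (RadicalModule k j × k) :=
  lift (isPreprojFamily_action j)

lemma action_inl (x : PreprojAlg k Q) (m : RadicalModule k j) :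
    action j x (m, 0) = (x • m, 0) := by
  induction x using induction generalizing m with
  | algebraMap c => simp
  | idem i => simp [action, idemAction_apply]
  | arrow a => simp [action, arrowAction_apply]
  | mul x y hx hy => rw [map_mul, Module.End.mul_apply, hy, hx, smul_smul]
  | add x y hx hy => rw [map_add, LinearMap.add_apply, hx, hy, add_smul]; simp

lemma action_sum_mul_arrow (y : Q.DoubleArrow → PreprojAlg k Q) :
    action j (∑ a, y a * arrow k a) (0, 1) = (toRadicalModule k j y, 0) := by
  have hterm (a : Q.DoubleArrow) :
      action j (y a * arrow k a) (0, 1) = (y a • generator k j a, 0) := by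
    rw [map_mul, Module.End.mul_apply, ← action_inl]
    simp [action, arrowAction_apply]
  rw [map_sum, LinearMap.sum_apply, ← sum_smul_generator]
  ext <;> simp only [hterm, Prod.fst_sum, Prod.snd_sum, Finset.sum_const_zero]

theorem exists_of_sum_mul_arrow_eq_zero {y : Q.DoubleArrow → PreprojAlg k Q}
    (hy : ∑ a, y a * arrow k a = 0) (j : Fin Q.r) :
    ∃ x, ∀ a, a.tgt = j → y a * ppIdem k Q a.src = a.sign k • (x * arrow k a.rev) := by
  have h := action_sum_mul_arrow (j := j) y
  rw [hy, map_zero, LinearMap.zero_apply] at h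
  exact toRadicalModule_eq_zero.1 (congrArg Prod.fst h).symm

lemma ppIdem_ne_zero (j : Fin Q.r) : ppIdem k Q j ≠ 0 := fun h => by
  simpa [action, idemAction_apply] using
    congrArg (fun x => (action (k := k) j x (0, 1)).2) h

end Exactness

/-! ### The recursion for the graded dimensions -/

section Corners

variable {n : ℕ} {i j : Fin Q.r} {x : PreprojAlg k Q}

lemma mem_ppCorner_iff : x ∈ ppCorner k Q n i j ↔
    x ∈ ppPiece k Q n ∧ ppIdem k Q i * x = x ∧ x * ppIdem k Q j = x := by
  constructor
  · rintro ⟨x, hx, rfl⟩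
    refine ⟨?_, by simp [← mul_assoc], by simp [mul_assoc]⟩
    simpa using mul_mem_ppPiece (m := 0) (n := n) (ppIdem_mem_ppPiece i)
      (mul_mem_ppPiece (m := n) (n := 0) hx (ppIdem_mem_ppPiece j))
  · rintro ⟨hx, hi, hj⟩
    exact ⟨x, hx, by simp [hi, hj]⟩

lemma mul_mul_mem_ppCorner (hx : x ∈ ppPiece k Q n) (i j : Fin Q.r) :
    ppIdem k Q i * x * ppIdem k Q j ∈ ppCorner k Q n i j :=
  ⟨x, hx, by simp [mul_assoc]⟩

lemma mul_arrow_mem_ppCorner (hx : x ∈ ppCorner k Q n i j) {a : Q.DoubleArrow}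
    {l : Fin Q.r} (hl : a.tgt = l) : x * arrow k a ∈ ppCorner k Q (n + 1) i l := by
  obtain ⟨hn, hi, -⟩ := mem_ppCorner_iff.1 hx
  exact mem_ppCorner_iff.2 ⟨mul_mem_ppPiece (m := n) (n := 1) hn (arrow_mem_ppPiece a),
    by rw [← mul_assoc, hi], by rw [mul_assoc, ← hl, arrow_mul_ppIdem_tgt]⟩

lemma mul_arrow_eq_zero_of_mem_ppCorner (hx : x ∈ ppCorner k Q n i j) {a : Q.DoubleArrow}
    (h : j ≠ a.src) : x * arrow k a = 0 := by
  rw [← (mem_ppCorner_iff.1 hx).2.2, ← ppIdem_src_mul_arrow, mul_assoc,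
    ← mul_assoc (ppIdem k Q j), ppIdem_mul_of_ne h, zero_mul, mul_zero]

lemma ppCorner_zero_self (i : Fin Q.r) : ppCorner k Q 0 i i = k ∙ ppIdem k Q i := by
  refine le_antisymm (fun x hx => ?_) ?_
  · obtain ⟨h0, hi, -⟩ := mem_ppCorner_iff.1 hx
    obtain ⟨c, hc⟩ := exists_eq_sum_smul_ppIdem h0
    refine Submodule.mem_span_singleton.2 ⟨c i, ?_⟩
    rw [← hi, hc]
    simp [Finset.mul_sum, ppIdem_mul]
  · rw [Submodule.span_singleton_le_iff_mem, mem_ppCorner_iff]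
    exact ⟨ppIdem_mem_ppPiece i, ppIdem_mul_self i, ppIdem_mul_self i⟩

lemma ppCorner_zero_of_ne (h : i ≠ j) : ppCorner k Q 0 i j = ⊥ := by
  refine (Submodule.eq_bot_iff _).2 fun x hx => ?_
  obtain ⟨h0, hi, hj⟩ := mem_ppCorner_iff.1 hx
  obtain ⟨c, hc⟩ := exists_eq_sum_smul_ppIdem h0
  rw [← hj, ← hi, hc]
  simp [Finset.mul_sum, ppIdem_mul, h]

/-- The space `⨁ e_i Π(Q)ₙ e_{s(a)}` over the arrows `a` of the double quiver ending at `j`. -/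
abbrev CornerFamily (k : Type) [Field k] (Q : FinQuiver) (n : ℕ) (i j : Fin Q.r) : Type :=
  (a : {a : Q.DoubleArrow // a.tgt = j}) → ppCorner k Q n i a.1.src

/-- The map `y ↦ ∑ y a * a` from `⨁ e_i Π(Q)ₙ e_{s(a)}` to `e_i Π(Q)ₙ₊₁ e_j`. -/
noncomputable def cornerSum (k : Type) [Field k] (Q : FinQuiver) (n : ℕ) (i j : Fin Q.r) :
    CornerFamily k Q n i j →ₗ[k] ppCorner k Q (n + 1) i j :=
  LinearMap.codRestrict _
    (∑ a, LinearMap.mulRight k (arrow k a.1) ∘ₗ Submodule.subtype _ ∘ₗ LinearMap.proj a) fun y => by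
      rw [LinearMap.sum_apply]
      exact sum_mem fun a _ => mul_arrow_mem_ppCorner (y a).2 a.2

lemma coe_cornerSum (y : CornerFamily k Q n i j) :
    (cornerSum k Q n i j y : PreprojAlg k Q) = ∑ a, (y a : PreprojAlg k Q) * arrow k a.1 := by
  simp [cornerSum]

/-- The map `x ↦ (± x * a*)ₐ` from `e_i Π(Q)ₙ e_j` to `⨁ e_i Π(Q)ₙ₊₁ e_{s(a)}`. -/
noncomputable def cornerMesh (k : Type) [Field k] (Q : FinQuiver) (n : ℕ) (i j : Fin Q.r) :
    ppCorner k Q n i j →ₗ[k] CornerFamily k Q (n + 1) i j :=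
  LinearMap.pi fun a => a.1.sign k • (LinearMap.mulRight k (arrow k a.1.rev)).restrict
    fun _ hx => mul_arrow_mem_ppCorner hx a.1.tgt_rev

lemma coe_cornerMesh (x : ppCorner k Q n i j) (a : {a : Q.DoubleArrow // a.tgt = j}) :
    (cornerMesh k Q n i j x a : PreprojAlg k Q) =
      a.1.sign k • ((x : PreprojAlg k Q) * arrow k a.1.rev) := rfl

theorem cornerSum_surjective (n : ℕ) (i j : Fin Q.r) :
    Function.Surjective (cornerSum k Q n i j) := by
  rintro ⟨z, hz⟩
  obtain ⟨hn, hi, hj⟩ := mem_ppCorner_iff.1 hz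
  obtain ⟨w, hw, rfl⟩ := exists_eq_sum_mul_arrow hn
  refine ⟨fun a => ⟨_, mul_mul_mem_ppCorner (hw a.1) i a.1.src⟩, Subtype.ext ?_⟩
  rw [coe_cornerSum]
  refine Eq.trans ?_ hj
  rw [← hi, Finset.mul_sum, Finset.sum_mul]
  refine Fintype.sum_of_injective Subtype.val Subtype.val_injective _ _ (fun a ha => ?_) fun a => ?_
  · rw [mul_assoc, mul_assoc, arrow_mul_ppIdem, if_neg (by simpa using ha), mul_zero, mul_zero]
  · rw [mul_assoc, ppIdem_src_mul_arrow, mul_assoc, mul_assoc, mul_assoc, arrow_mul_ppIdem,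
      if_pos a.2]

lemma exists_of_cornerSum_eq_zero {y : CornerFamily k Q n i j} (hy : cornerSum k Q n i j y = 0) :
    ∃ x, ∀ a, (y a : PreprojAlg k Q) = a.1.sign k • (x * arrow k a.1.rev) := by
  classical
  let w : Q.DoubleArrow → PreprojAlg k Q := fun a => if h : a.tgt = j then y ⟨a, h⟩ else 0
  have hw (a : {a : Q.DoubleArrow // a.tgt = j}) : w a.1 = y a := dif_pos a.2
  have hsum : ∑ a, w a * arrow k a = 0 := by
    rw [← (Submodule.coe_eq_zero (p := ppCorner k Q (n + 1) i j)).2 hy, coe_cornerSum]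
    refine (Fintype.sum_of_injective Subtype.val Subtype.val_injective _ _ (fun a ha => ?_)
      fun a => ?_).symm
    · rw [show w a = 0 from dif_neg (by simpa using ha), zero_mul]
    · rw [hw]
  obtain ⟨x, hx⟩ := exists_of_sum_mul_arrow_eq_zero hsum j
  exact ⟨x, fun a => by rw [← hx a.1 a.2, hw, (mem_ppCorner_iff.1 (y a).2).2.2]⟩

theorem ker_cornerSum_zero (i j : Fin Q.r) : LinearMap.ker (cornerSum k Q 0 i j) = ⊥ := by
  refine LinearMap.ker_eq_bot'.2 fun y hy => ?_
  obtain ⟨x, hx⟩ := exists_of_cornerSum_eq_zero hy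
  ext a
  rw [← proj_of_mem (mem_ppCorner_iff.1 (y a).2).1, hx, map_smul, proj_zero_mul_arrow, smul_zero]
  rfl

theorem ker_cornerSum_succ (n : ℕ) (i j : Fin Q.r) :
    LinearMap.ker (cornerSum k Q (n + 1) i j) = LinearMap.range (cornerMesh k Q n i j) := by
  apply le_antisymm
  · intro y hy
    obtain ⟨x, hx⟩ := exists_of_cornerSum_eq_zero hy
    refine ⟨⟨_, mul_mul_mem_ppCorner (proj_mem n x) i j⟩, ?_⟩
    ext a
    obtain ⟨hn, hi, -⟩ := mem_ppCorner_iff.1 (y a).2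
    have hrev := ppIdem_src_mul_arrow (k := k) a.1.rev
    rw [FinQuiver.DoubleArrow.src_rev, a.2] at hrev
    rw [coe_cornerMesh, mul_assoc, hrev, mul_assoc, ← proj_succ_mul_arrow, ← mul_smul_comm,
      ← map_smul, ← hx, proj_of_mem hn, hi]
  · rintro _ ⟨x, rfl⟩
    refine LinearMap.mem_ker.2 (Subtype.ext ?_)
    have hmesh := congrArg ((x : PreprojAlg k Q) * ·) (isPreprojFamily.mesh (k := k) j)
    simp only [Finset.mul_sum, mul_zero] at hmesh
    calc (cornerSum k Q (n + 1) i j (cornerMesh k Q n i j x) : PreprojAlg k Q)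
        = ∑ a : {a : Q.DoubleArrow // a.tgt = j},
            x * a.1.sign k • (arrow k a.1.rev * arrow k a.1) := by
          simp only [coe_cornerSum, coe_cornerMesh, smul_mul_assoc, mul_smul_comm, mul_assoc]
      _ = ∑ a with FinQuiver.DoubleArrow.tgt a = j, x * a.sign k • (arrow k a.rev * arrow k a) :=
          (Finset.sum_subtype _ (by simp) fun a : Q.DoubleArrow =>
            (x : PreprojAlg k Q) * a.sign k • (arrow k a.rev * arrow k a)).symm
      _ = 0 := hmesh

instance (n : ℕ) (i j : Fin Q.r) : FiniteDimensional k (ppCorner k Q n i j) := by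
  induction n generalizing j with
  | zero =>
    rcases eq_or_ne i j with rfl | h
    · rw [ppCorner_zero_self]
      infer_instance
    · rw [ppCorner_zero_of_ne h]
      infer_instance
  | succ n ih => exact Module.Finite.of_surjective _ (cornerSum_surjective n i j)

instance (n : ℕ) (i j : Fin Q.r) : Module.Free k (ppCorner k Q n i j) :=
  Module.Free.of_divisionRing k (ppCorner k Q n i j)

/-- The left annihilator of the arrows, that is, the socle of `Π(Q)` as a right module. -/
noncomputable def socle (k : Type) [Field k] (Q : FinQuiver) : Submodule k (PreprojAlg k Q) :=
  ⨅ a : Q.DoubleArrow, LinearMap.ker (LinearMap.mulRight k (arrow k a))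

lemma mem_socle : x ∈ socle k Q ↔ ∀ a, x * arrow k a = 0 := by
  simp [socle, -Sum.forall]

lemma map_subtype_ker_cornerMesh (n : ℕ) (i j : Fin Q.r) :
    (LinearMap.ker (cornerMesh k Q n i j)).map (ppCorner k Q n i j).subtype =
      ppCorner k Q n i j ⊓ socle k Q := by
  rw [← Submodule.map_comap_subtype]
  congr 1
  ext x
  rw [Submodule.mem_comap, mem_socle, LinearMap.mem_ker]
  constructor
  · intro hx b
    by_cases h : j = b.src
    · have hb := coe_cornerMesh x ⟨b.rev, b.tgt_rev.trans h.symm⟩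
      rw [hx, eq_comm] at hb
      simpa [FinQuiver.DoubleArrow.sign_ne_zero] using hb
    · exact mul_arrow_eq_zero_of_mem_ppCorner x.2 h
  · intro hx
    ext a
    exact (congrArg _ (hx _)).trans (smul_zero _)

end Corners

section Dimensions

/-- The matrix `[Π(Q)ₙ]` of dimensions of the spaces `e_i Π(Q)ₙ e_j`. -/
noncomputable def dimMatrix (k : Type) [Field k] (Q : FinQuiver) (n : ℕ) :
    Matrix (Fin Q.r) (Fin Q.r) ℕ :=
  Matrix.of fun i j => Module.finrank k (ppCorner k Q n i j)

/-- The matrix of dimensions of the parts of the spaces `e_i Π(Q)ₙ e_j` in the socle. -/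
noncomputable def socleDimMatrix (k : Type) [Field k] (Q : FinQuiver) (n : ℕ) :
    Matrix (Fin Q.r) (Fin Q.r) ℕ :=
  Matrix.of fun i j => Module.finrank k ↥(ppCorner k Q n i j ⊓ socle k Q)

theorem dimMatrix_zero : dimMatrix k Q 0 = 1 := by
  ext i j
  rw [dimMatrix, Matrix.of_apply, Matrix.one_apply]
  split_ifs with h
  · rw [← h, ppCorner_zero_self, finrank_span_singleton (ppIdem_ne_zero i)]
  · rw [ppCorner_zero_of_ne h, finrank_bot]

lemma dimMatrix_succ_add_finrank_ker (n : ℕ) (i j : Fin Q.r) :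
    dimMatrix k Q (n + 1) i j + Module.finrank k (LinearMap.ker (cornerSum k Q n i j)) =
      (dimMatrix k Q n * Q.doubleAdj) i j := by
  have h := LinearMap.finrank_range_add_finrank_ker (K := k) (V := CornerFamily k Q n i j)
    (V₂ := ppCorner k Q (n + 1) i j)
    (cornerSum k Q n i j)
  rw [LinearMap.range_eq_top.2 (cornerSum_surjective n i j), finrank_top,
    Module.finrank_pi_fintype] at h
  exact h.trans (FinQuiver.vecMul_doubleAdj (dimMatrix k Q n i) j).symm

theorem dimMatrix_one : dimMatrix k Q 1 = Q.doubleAdj := by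
  ext i j
  have h := dimMatrix_succ_add_finrank_ker (k := k) 0 i j
  rwa [ker_cornerSum_zero, finrank_bot, add_zero, dimMatrix_zero, one_mul] at h

theorem dimMatrix_add_two_add (n : ℕ) : dimMatrix k Q (n + 2) + dimMatrix k Q n =
    dimMatrix k Q (n + 1) * Q.doubleAdj + socleDimMatrix k Q n := by
  ext i j
  have hsum := dimMatrix_succ_add_finrank_ker (k := k) (n + 1) i j
  have hmesh := LinearMap.finrank_range_add_finrank_ker (K := k) (V := ppCorner k Q n i j)
    (V₂ := CornerFamily k Q (n + 1) i j)
    (cornerMesh k Q n i j)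
  rw [← Submodule.finrank_map_subtype_eq, map_subtype_ker_cornerMesh] at hmesh
  rw [ker_cornerSum_succ] at hsum
  rw [Matrix.add_apply, Matrix.add_apply, ← hsum, add_assoc, Nat.add_left_cancel_iff]
  exact hmesh.symm

end Dimensions

/-! ### The socle -/

section Nakayama

variable {i : Fin Q.r} {ν : Equiv.Perm (Fin Q.r)}

lemma mem_ppRowIdeal_iff {x : PreprojAlg k Q} :
    x ∈ ppRowIdeal k Q i ↔ ppIdem k Q i * x = x := by
  constructor
  · rintro ⟨x, rfl⟩
    simp [← mul_assoc]
  · exact fun hx => ⟨x, hx⟩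

instance : Countable (PPGen Q) := by
  refine Function.Surjective.countable
    (f := Sum.elim PPGen.vert FinQuiver.DoubleArrow.toGen) ?_
  rintro (i | a | a)
  exacts [⟨.inl i, rfl⟩, ⟨.inr (.inl a), rfl⟩, ⟨.inr (.inr a), rfl⟩]

lemma rank_le_aleph0 : Module.rank k (PreprojAlg k Q) ≤ Cardinal.aleph0 := by
  refine (LinearMap.rank_le_of_surjective (RingQuot.mkAlgHom k (PPRel k Q)).toLinearMap
    (RingQuot.mkAlgHom_surjective k _)).trans ?_
  rw [FreeAlgebra.rank_eq, Cardinal.lift_le_aleph0]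
  exact Cardinal.mk_le_aleph0

/-- An infinite-dimensional space of countable dimension has a dual of uncountable dimension. -/
theorem finiteDimensional_ppRowIdeal (hν : IsNakayamaPerm k Q ν) (i : Fin Q.r) :
    FiniteDimensional k (ppRowIdeal k Q i) := by
  have := Module.Free.of_divisionRing k (ppRowIdeal k Q i)
  rw [FiniteDimensional, ← Module.rank_lt_aleph0_iff]
  by_contra! h
  obtain ⟨φ, -⟩ := hν i
  have hdual := rank_lt_rank_dual (K := k) (V := ppRowIdeal k Q i) h
  rw [← φ.rank_eq] at hdual
  exact (h.trans_lt hdual).not_ge ((Submodule.rank_le _).trans rank_le_aleph0)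

/-- The image of `e_{ν i}` under `Π e_{ν i} ≃ D(e_i Π)`, extended to `Π` along `x ↦ e_i x`. -/
lemma exists_dual_of_isNakayamaPerm (hν : IsNakayamaPerm k Q ν) (i : Fin Q.r) :
    ∃ f : Module.Dual k (PreprojAlg k Q), (∀ x, f (x * ppIdem k Q (ν i)) = f x) ∧
      ∀ x ∈ ppRowIdeal k Q i, (∀ y, f (x * y) = 0) → x = 0 := by
  have := Module.Free.of_divisionRing k (ppRowIdeal k Q i)
  obtain ⟨φ, hφ⟩ := hν i
  let e : ppColIdeal k Q (ν i) := ⟨ppIdem k Q (ν i), 1, by simp⟩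
  refine ⟨φ e ∘ₗ (LinearMap.mulLeft k (ppIdem k Q i)).rangeRestrict, fun x => ?_,
    fun x hx hxf => ?_⟩
  · have he : (⟨ppIdem k Q (ν i) * e, mul_mem_ppColIdeal k Q _ _ e.2⟩ : ppColIdeal k Q (ν i)) = e :=
      Subtype.ext (ppIdem_mul_self _)
    have h := hφ (ppIdem k Q (ν i)) e ⟨_, x, rfl⟩
    rw [he] at h
    refine Eq.trans (congrArg (φ e) (Subtype.ext ?_)) h.symm
    exact (mul_assoc _ _ _).symm
  · suffices h : (⟨x, hx⟩ : ppRowIdeal k Q i) = 0 from congrArg Subtype.val h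
    rw [← Module.forall_dual_apply_eq_zero_iff k]
    intro g
    obtain ⟨⟨_, y, rfl⟩, rfl⟩ := φ.surjective g
    refine (hφ y e ⟨x, hx⟩).trans (Eq.trans (congrArg (φ e) (Subtype.ext ?_)) (hxf y))
    change x * y = ppIdem k Q i * (x * y)
    rw [← mul_assoc, mem_ppRowIdeal_iff.1 hx]

lemma mul_mem_socle_inf_ker {f : Module.Dual k (PreprojAlg k Q)} {j : Fin Q.r}
    (hf : ∀ x, f (x * ppIdem k Q j) = f x) {x : PreprojAlg k Q}
    (hx : x ∈ socle k Q ⊓ LinearMap.ker f) (y : PreprojAlg k Q) :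
    x * y ∈ socle k Q ⊓ LinearMap.ker f := by
  induction y using induction generalizing x with
  | algebraMap c =>
    rw [← Algebra.commutes, ← Algebra.smul_def]
    exact Submodule.smul_mem _ c hx
  | idem l =>
    refine ⟨mem_socle.2 fun a => ?_, ?_⟩
    · by_cases h : l = a.src
      · rw [mul_assoc, h, ppIdem_src_mul_arrow, mem_socle.1 hx.1]
      · rw [mul_assoc, ← ppIdem_src_mul_arrow, ← mul_assoc (ppIdem k Q l), ppIdem_mul_of_ne h,
          zero_mul, mul_zero]
    · change f _ = 0
      rw [← hf, mul_assoc, ppIdem_mul]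
      split_ifs with h
      · rw [h, hf, hx.2]
      · rw [mul_zero, map_zero]
  | arrow a =>
    rw [mem_socle.1 hx.1]
    exact zero_mem _
  | mul y z hy hz =>
    rw [← mul_assoc]
    exact hz (hy hx)
  | add y z hy hz =>
    rw [mul_add]
    exact add_mem (hy hx) (hz hx)

theorem exists_dual_injOn_socle (hν : IsNakayamaPerm k Q ν) (i : Fin Q.r) :
    ∃ f : Module.Dual k (PreprojAlg k Q), (∀ x, f (x * ppIdem k Q (ν i)) = f x) ∧
      ∀ x ∈ ppRowIdeal k Q i ⊓ socle k Q, f x = 0 → x = 0 := by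
  obtain ⟨f, hf, hinj⟩ := exists_dual_of_isNakayamaPerm hν i
  exact ⟨f, hf, fun x hx h0 => hinj x hx.1 fun y => (mul_mem_socle_inf_ker hf ⟨hx.2, h0⟩ y).2⟩

lemma dimMatrix_row_eq_zero_iff {n : ℕ} :
    dimMatrix k Q n i = 0 ↔ ∀ j, ppCorner k Q n i j = ⊥ := by
  rw [funext_iff]
  exact forall_congr' fun j => Submodule.finrank_eq_zero

lemma dimMatrix_succ_row_eq_zero {n : ℕ} (h : dimMatrix k Q n i = 0) :
    dimMatrix k Q (n + 1) i = 0 := by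
  rw [dimMatrix_row_eq_zero_iff] at h ⊢
  intro j
  refine (Submodule.eq_bot_iff _).2 fun x hx => ?_
  obtain ⟨y, hy⟩ := cornerSum_surjective n i j ⟨x, hx⟩
  rw [show y = 0 from funext fun a => Subtype.ext ((Submodule.eq_bot_iff _).1 (h _) _ (y a).2),
    map_zero] at hy
  exact (congrArg Subtype.val hy).symm

lemma exists_dimMatrix_row_eq_zero [FiniteDimensional k (ppRowIdeal k Q i)] :
    ∃ n, dimMatrix k Q n i = 0 := by
  by_contra! h
  have hex (n : ℕ) : ∃ x ∈ ppRowIdeal k Q i, x ∈ ppPiece k Q n ∧ x ≠ 0 := by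
    have hn := mt dimMatrix_row_eq_zero_iff.2 (h n)
    push Not at hn
    obtain ⟨j, hj⟩ := hn
    obtain ⟨x, hx, hx0⟩ := (Submodule.ne_bot_iff _).1 hj
    obtain ⟨hpiece, hi, -⟩ := mem_ppCorner_iff.1 hx
    exact ⟨x, mem_ppRowIdeal_iff.2 hi, hpiece, hx0⟩
  choose x hrow hpiece hne using hex
  have hind : LinearIndependent k x :=
    (DirectSum.Decomposition.isInternal (ppPiece k Q)).submodule_iSupIndep.linearIndependent _
      hpiece hne
  have hrowind : LinearIndependent k fun n => (⟨x n, hrow n⟩ : ppRowIdeal k Q i) :=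
    .of_comp (ppRowIdeal k Q i).subtype hind
  have := hrowind.finite
  exact not_finite ℕ

theorem exists_dimMatrix_row_eq_zero_iff [FiniteDimensional k (ppRowIdeal k Q i)] :
    ∃ d, ∀ n, dimMatrix k Q n i = 0 ↔ d < n := by
  classical
  have hex := exists_dimMatrix_row_eq_zero (k := k) (i := i)
  have hpos : Nat.find hex ≠ 0 := by
    intro h
    have h0 := Nat.find_spec hex
    rw [h, dimMatrix_zero] at h0
    simpa using congrFun h0 i
  refine ⟨Nat.find hex - 1, fun n => ⟨fun hn => ?_, fun hn => ?_⟩⟩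
  · have := Nat.find_min' hex hn
    lia
  · have hle : Nat.find hex ≤ n := by lia
    induction n, hle using Nat.le_induction with
    | base => exact Nat.find_spec hex
    | succ n hle ih => exact dimMatrix_succ_row_eq_zero (ih (by lia))

variable {d : ℕ}

lemma ppCorner_le_socle (hd : dimMatrix k Q (d + 1) i = 0) (j : Fin Q.r) :
    ppCorner k Q d i j ≤ socle k Q := fun x hx => mem_socle.2 fun a => by
  have h := mul_arrow_mem_ppCorner hx (a := a) rfl
  rwa [dimMatrix_row_eq_zero_iff.1 hd, Submodule.mem_bot] at h

theorem exists_ppRowIdeal_inf_socle_eq_span (hν : IsNakayamaPerm k Q ν)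
    (hd : dimMatrix k Q d i ≠ 0) (hd' : dimMatrix k Q (d + 1) i = 0) :
    ∃ y ∈ ppCorner k Q d i (ν i), y ≠ 0 ∧ ppRowIdeal k Q i ⊓ socle k Q = k ∙ y := by
  obtain ⟨f, hf, hinj⟩ := exists_dual_injOn_socle hν i
  obtain ⟨j, hj⟩ := not_forall.1 (mt dimMatrix_row_eq_zero_iff.2 hd)
  obtain ⟨y, hy, hy0⟩ := (Submodule.ne_bot_iff _).1 hj
  obtain ⟨-, hyi, hyj⟩ := mem_ppCorner_iff.1 hy
  have hys : y ∈ ppRowIdeal k Q i ⊓ socle k Q :=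
    ⟨mem_ppRowIdeal_iff.2 hyi, ppCorner_le_socle hd' j hy⟩
  have hfy : f y ≠ 0 := mt (hinj y hys) hy0
  obtain rfl : j = ν i := by
    by_contra h
    exact hfy (by rw [← hf, ← hyj, mul_assoc, ppIdem_mul_of_ne h, mul_zero, map_zero])
  refine ⟨y, hy, hy0, le_antisymm (fun x hx => ?_) ?_⟩
  · refine Submodule.mem_span_singleton.2 ⟨f x / f y, (sub_eq_zero.1 ?_).symm⟩
    refine hinj _ (sub_mem hx (Submodule.smul_mem _ _ hys)) ?_
    rw [map_sub, map_smul, smul_eq_mul, div_mul_cancel₀ _ hfy, sub_self]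
  · rwa [Submodule.span_singleton_le_iff_mem]

theorem socleDimMatrix_apply (hν : IsNakayamaPerm k Q ν) (hd : dimMatrix k Q d i ≠ 0)
    (hd' : dimMatrix k Q (d + 1) i = 0) (n : ℕ) (j : Fin Q.r) :
    socleDimMatrix k Q n i j = if n = d ∧ ν i = j then 1 else 0 := by
  obtain ⟨y, hy, hy0, hspan⟩ := exists_ppRowIdeal_inf_socle_eq_span hν hd hd'
  obtain ⟨hyd, -, hyj⟩ := mem_ppCorner_iff.1 hy
  have hys : y ∈ ppRowIdeal k Q i ⊓ socle k Q := hspan ▸ Submodule.mem_span_singleton_self y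
  have hle : ppCorner k Q n i j ⊓ socle k Q ≤ k ∙ y := hspan ▸ inf_le_inf_right _ fun x hx =>
    mem_ppRowIdeal_iff.2 (mem_ppCorner_iff.1 hx).2.1
  rw [socleDimMatrix, Matrix.of_apply]
  split_ifs with h
  · obtain ⟨rfl, rfl⟩ := h
    rw [hle.antisymm, finrank_span_singleton hy0]
    exact (Submodule.span_singleton_le_iff_mem _ _).2 ⟨hy, hys.2⟩
  · rw [Submodule.finrank_eq_zero, Submodule.eq_bot_iff]
    intro x hx
    obtain ⟨c, rfl⟩ := Submodule.mem_span_singleton.1 (hle hx)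
    obtain ⟨hn, -, hj⟩ := mem_ppCorner_iff.1 hx.1
    rcases not_and_or.1 h with h | h
    · rw [← proj_of_mem hn, proj_of_mem_of_ne (Submodule.smul_mem _ c hyd) (Ne.symm h)]
    · rw [← hj, ← hyj, smul_mul_assoc, mul_assoc, ppIdem_mul_of_ne h, mul_zero, smul_zero]

end Nakayama

/-! ### The Hilbert series -/

section Recursion

variable {ν : Equiv.Perm (Fin Q.r)}

lemma mapMatrix_dimMatrix_row {i : Fin Q.r} {d : ℕ} (hs : ∀ n < d, socleDimMatrix k Q n i = 0)
    {n : ℕ} (hn : n ≤ d + 1) :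
    (Nat.castRingHom ℤ).mapMatrix (dimMatrix k Q n) i = chebMatrix Q.adjZ n i := by
  rw [eq_vecMul_chebMatrix (C := Q.adjZ)
    (u := fun n => (Nat.castRingHom ℤ).mapMatrix (dimMatrix k Q n) i) ?_ (fun n hn => ?_) n hn,
    ← Matrix.mul_apply_eq_vecMul, dimMatrix_zero, map_one, one_mul]
  · rw [← Matrix.mul_apply_eq_vecMul, dimMatrix_zero, map_one, one_mul, dimMatrix_one]
    rfl
  · have h := congrArg (Nat.castRingHom ℤ).mapMatrix (dimMatrix_add_two_add (k := k) (Q := Q) n)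
    rw [map_add, map_add, map_mul] at h
    have hsn : (Nat.castRingHom ℤ).mapMatrix (socleDimMatrix k Q n) i = 0 :=
      funext fun j => congrArg Nat.cast (congrFun (hs n hn) j)
    refine (congrFun h i).trans ?_
    exact (congrArg _ hsn).trans (add_zero _)

lemma mapMatrix_row_eq_zero_iff {A : Matrix (Fin Q.r) (Fin Q.r) ℕ} {i : Fin Q.r} :
    (Nat.castRingHom ℤ).mapMatrix A i = 0 ↔ A i = 0 := by
  simp [funext_iff]

theorem exists_topDegree [Nonempty (Fin Q.r)] (hconn : Q.Connected) (hν : IsNakayamaPerm k Q ν) :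
    ∃ D, ∀ i n, dimMatrix k Q n i = 0 ↔ D < n := by
  have (i : Fin Q.r) := finiteDimensional_ppRowIdeal hν i
  choose d hd using fun i : Fin Q.r => exists_dimMatrix_row_eq_zero_iff (k := k) (i := i)
  have hcheb (i : Fin Q.r) {n : ℕ} (hn : n ≤ d i + 1) :
      (Nat.castRingHom ℤ).mapMatrix (dimMatrix k Q n) i = chebMatrix Q.adjZ n i := by
    refine mapMatrix_dimMatrix_row (fun n hn => funext fun j => ?_) hn
    rw [socleDimMatrix_apply hν (mt (hd i _).1 (lt_irrefl _)) ((hd i _).2 (lt_add_one _)),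
      if_neg fun h => hn.ne h.1]
    rfl
  obtain ⟨D, hD⟩ := exists_forall_eq_of_chebMatrix_rows (C := Q.adjZ) (d := d)
    FinQuiver.adjZ_nonneg (FinQuiver.reflTransGen_adjZ_ne_zero hconn)
    (fun i n hn j => by
      rw [← hcheb i hn]
      exact Int.natCast_nonneg _)
    (fun i n hn => by
      rw [← hcheb i hn, mapMatrix_row_eq_zero_iff, hd]
      lia)
  exact ⟨D, fun i n => by rw [hd, hD]⟩

variable {D : ℕ}

lemma socleDimMatrix_eq (hν : IsNakayamaPerm k Q ν)
    (hD : ∀ i n, dimMatrix k Q n i = 0 ↔ D < n) (n : ℕ) :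
    socleDimMatrix k Q n = if n = D then ν.permMatrix ℕ else 0 := by
  ext i j
  rw [socleDimMatrix_apply hν (mt (hD i D).1 (lt_irrefl _)) ((hD i _).2 (lt_add_one _))]
  split_ifs with h hn hn <;> simp_all [Equiv.Perm.permMatrix, PEquiv.toMatrix_apply]

theorem chebyshevPositiveUpTo_adjZ (hν : IsNakayamaPerm k Q ν)
    (hD : ∀ i n, dimMatrix k Q n i = 0 ↔ D < n) : ChebyshevPositiveUpTo Q.adjZ D := by
  have hcheb {n : ℕ} (hn : n ≤ D + 1) (i : Fin Q.r) :
      (Nat.castRingHom ℤ).mapMatrix (dimMatrix k Q n) i = chebMatrix Q.adjZ n i :=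
    mapMatrix_dimMatrix_row (fun n hn => by rw [socleDimMatrix_eq hν hD, if_neg hn.ne]; rfl) hn
  refine ⟨fun n hn i j => ?_, fun n hn i => ?_, ?_⟩
  · rw [← hcheb (Nat.le_add_right_of_le hn)]
    exact Int.natCast_nonneg _
  · rw [← hcheb (Nat.le_add_right_of_le hn), ne_eq, mapMatrix_row_eq_zero_iff, hD]
    exact hn.not_gt
  · refine funext fun i => (hcheb le_rfl i).symm.trans ?_
    rw [mapMatrix_row_eq_zero_iff.2 ((hD i _).2 (lt_add_one D))]
    rfl

theorem ppHilb_mul_one_sub_X_smul_add (hν : IsNakayamaPerm k Q ν)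
    (hD : ∀ i n, dimMatrix k Q n i = 0 ↔ D < n) :
    ppHilb k Q * (1 - (PowerSeries.X : PowerSeries k) • (Q.doubleAdj.map Nat.cast) +
        (PowerSeries.X ^ 2 : PowerSeries k) • 1) =
      1 + (PowerSeries.X ^ (D + 2) : PowerSeries k) • ν.permMatrix (PowerSeries k) := by
  let H (n : ℕ) : Matrix (Fin Q.r) (Fin Q.r) k := (Nat.castRingHom k).mapMatrix (dimMatrix k Q n)
  let P : Matrix (Fin Q.r) (Fin Q.r) k := (Nat.castRingHom k).mapMatrix (ν.permMatrix ℕ)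
  have hrec (n : ℕ) : H (n + 2) + H n = H (n + 1) * (Nat.castRingHom k).mapMatrix Q.doubleAdj +
      if n = D then P else 0 := by
    rw [← map_zero (Nat.castRingHom k).mapMatrix, ← apply_ite, ← socleDimMatrix_eq hν hD, ← map_mul,
      ← map_add, ← map_add, dimMatrix_add_two_add]
  have hC : Q.doubleAdj.map Nat.cast =
      ((Nat.castRingHom k).mapMatrix Q.doubleAdj).map PowerSeries.C := by
    ext i j : 2
    simp
  have hP : ν.permMatrix (PowerSeries k) = P.map PowerSeries.C := by
    ext i j : 2
    by_cases hij : ν i = j <;> simp [P, Equiv.Perm.permMatrix, PEquiv.toMatrix_apply, hij]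
  rw [hC, hP]
  exact hilbertSeries_mul_one_sub_X_smul_add (H := H) (by simp only [H, dimMatrix_zero, map_one])
    (by simp only [H, dimMatrix_one]) hrec

end Recursion

end PreprojAlg

/-- **Hilbert series of the preprojective algebra, Dynkin case, in arbitrary
characteristic** (Malkin–Ostrik–Vybornov in characteristic zero).
Let `Q` be a connected finite acyclic Dynkin quiver with Coxeter number `h`,
`C` the adjacency matrix of the double quiver, `ν` a Nakayama permutation of
`Π(Q)` and `P` its permutation matrix.  Then
`h_Π(t)·(1 - C t + t²·1) = 1 + P t^h` in the ring of `r × r` matrices over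
`k[[t]]`; equivalently `h_Π(t) = (1 + P t^h)/(1 - C t + t²)`. -/
theorem preprojective_hilbert_series_dynkin
    (k : Type) [Field k] (Q : FinQuiver) (hr : 0 < Q.r)
    (hconn : Q.Connected) (hacyc : Q.Acyclic) (hdynkin : Q.IsDynkin)
    (h : ℕ) (hcox : Q.IsCoxeterNumber h)
    (ν : Equiv.Perm (Fin Q.r)) (hν : IsNakayamaPerm k Q ν) :
    ppHilb k Q *
      (1 - (PowerSeries.X : PowerSeries k) • (Q.doubleAdj.map (Nat.cast : ℕ → PowerSeries k))
        + (PowerSeries.X ^ 2 : PowerSeries k) •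
            (1 : Matrix (Fin Q.r) (Fin Q.r) (PowerSeries k))) =
    1 + Matrix.of (fun i j : Fin Q.r =>
          if ν i = j then (PowerSeries.X ^ h : PowerSeries k) else 0) := by
  have : Nonempty (Fin Q.r) := ⟨⟨0, hr⟩⟩
  obtain ⟨D, hD⟩ := PreprojAlg.exists_topDegree hconn hν
  have hroots := FinQuiver.ncard_roots hdynkin hconn hacyc
    (PreprojAlg.chebyshevPositiveUpTo_adjZ hν hD)
  obtain rfl : D + 2 = h := Nat.eq_of_mul_eq_mul_left hr (hroots.symm.trans hcox)
  rw [PreprojAlg.ppHilb_mul_one_sub_X_smul_add hν hD]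
  congr 1
  ext i j : 2
  simp [Equiv.Perm.permMatrix, PEquiv.toMatrix_apply]
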